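/- Existence of recovery sequences (discrete form of Proposition 3.11 of the paper, for continuously differentiable limits): assume Assumption H and Assumption A:2T. There exists a set Ω₁ ∈ ℱ with ℙ(Ω₁) = 1 such that for every ω ∈ Ω₁, every open axis-parallel box A ⊂ ℝ^d and every function u : ℝ^d → ℝⁿ that is continuously differentiable on a neighbourhood of the closure of A, there exists a family (u_ε)_{ε>0} of functions u_ε : εℤ^d → ℝⁿ with lim_{ε↓0} ε^d Σ_{z∈εℤ^d∩A} |u_ε(z) − u(z)|^{pβ/(β+1)} = 0 and lim_{ε↓0} E_ε(ω;u_ε,A) = ∫_A W₀(Du(x)) dx, where Du(x) ∈ ℝ^{n×d} denotes the Jacobian matrix of u at x. -/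

import Mathlib

open MeasureTheory Filter Metric Set
open scoped Classical
open scoped ENNReal Topology Pointwise

noncomputable section

namespace StochHom

/-- `ℝ^d` with the Euclidean norm. -/
abbrev Rd (d : ℕ) : Type := EuclideanSpace ℝ (Fin d)

/-- `ℝ^n` with the Euclidean norm. -/
abbrev Rn (n : ℕ) : Type := EuclideanSpace ℝ (Fin n)

/-- The lattice `ℤ^d`. -/
abbrev Zd (d : ℕ) : Type := Fin d → ℤ

variable {d n : ℕ}

/-- The embedding of the lattice `ℤ^d` into `ℝ^d`. -/
def toRd (z : Zd d) : Rd d := (EuclideanSpace.equiv (Fin d) ℝ).symm fun i => (z i : ℝ)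

/-- The standard basis vectors `eᵢ` of `ℤ^d`. -/
def stdb (i : Fin d) : Zd d := fun j => if j = i then 1 else 0

/-- The interaction range `R = max {4√d, max_{b ∈ ℰ₀} |b|}`. -/
def irange (d : ℕ) (E0 : Finset (Zd d)) : ℝ :=
  max (4 * Real.sqrt d) (sSup ((fun b : Zd d => ‖toRd b‖) '' (E0 : Set (Zd d))))

variable {Ω : Type*} [MeasurableSpace Ω]

/-- The energy `E₁(ω; u, ℤ^d ∩ A)`. -/
def energy1 (τ : Zd d → Ω → Ω) (E0 : Finset (Zd d)) (V : Zd d → Ω → Rn n → ℝ)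
    (ω : Ω) (u : Zd d → Rn n) (A : Set (Rd d)) : ℝ :=
  ∑' z : Zd d, if toRd z ∈ A then
      ∑ b ∈ E0, V b (τ z ω) ((‖toRd b‖)⁻¹ • (u (z + b) - u z)) else 0

/-- The scaled energy `E_ε(ω; u, A)`, where a function `u : εℤ^d → ℝ^n` is identified with a
function on `ℤ^d` via `z ↦ u(εz)`, so that `∂_b^ε u (z) = (u (z+b) - u z)/(ε |b|)`. -/
def energyE (τ : Zd d → Ω → Ω) (E0 : Finset (Zd d)) (V : Zd d → Ω → Rn n → ℝ)
    (ε : ℝ) (ω : Ω) (u : Zd d → Rn n) (A : Set (Rd d)) : ℝ :=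
  ε ^ d * ∑' z : Zd d, if ε • toRd z ∈ A then
      ∑ b ∈ E0, V b (τ z ω) ((ε * ‖toRd b‖)⁻¹ • (u (z + b) - u z)) else 0

/-- The localized minimal energy `m_F(ω; A)`. -/
def mF (τ : Zd d → Ω → Ω) (E0 : Finset (Zd d)) (V : Zd d → Ω → Rn n → ℝ)
    (ω : Ω) (F : Rd d →L[ℝ] Rn n) (A : Set (Rd d)) : ℝ :=
  ⨅ φ : {φ : Zd d → Rn n // ∀ z : Zd d, infDist (toRd z) Aᶜ ≤ irange d E0 → φ z = 0},
    energy1 τ E0 V ω (fun z => F (toRd z) + φ.1 z) A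

/-- The half-open cube `[0,k)^d ⊂ ℝ^d`. -/
def cube (d k : ℕ) : Set (Rd d) := {x | ∀ i, 0 ≤ x i ∧ x i < (k : ℝ)}

/-- The homogenized energy density `W₀(F) = inf_{k ≥ 1} k⁻ᵈ E[m_F(·, [0,k)^d)]`. -/
def W0 (P : Measure Ω) (τ : Zd d → Ω → Ω) (E0 : Finset (Zd d))
    (V : Zd d → Ω → Rn n → ℝ) (F : Rd d →L[ℝ] Rn n) : ℝ :=
  ⨅ k : {k : ℕ // 0 < k}, (((k : ℕ) : ℝ) ^ d)⁻¹ * ∫ ω, mF τ E0 V ω F (cube d k) ∂P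

/-- Half-open axis-parallel box `Π_i [aᵢ, bᵢ)`. -/
def halfBox (a b : Fin d → ℝ) : Set (Rd d) := {x | ∀ i, a i ≤ x i ∧ x i < b i}

/-- Open axis-parallel box `Π_i (aᵢ, bᵢ)`. -/
def openBox (a b : Fin d → ℝ) : Set (Rd d) := {x | ∀ i, a i < x i ∧ x i < b i}

/-- Closed axis-parallel box `Π_i [aᵢ, bᵢ]`. -/
def closedBox (a b : Fin d → ℝ) : Set (Rd d) := {x | ∀ i, a i ≤ x i ∧ x i ≤ b i}

/-- Half-open axis-parallel box with integer corners. -/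
def intBox (a b : Zd d) : Set (Rd d) := {x | ∀ i, (a i : ℝ) ≤ x i ∧ x i < (b i : ℝ)}

/-- The periodic cell minimization `W^{(k)}(ω; F)`. -/
def Wper (τ : Zd d → Ω → Ω) (E0 : Finset (Zd d)) (V : Zd d → Ω → Rn n → ℝ)
    (k : ℕ) (ω : Ω) (F : Rd d →L[ℝ] Rn n) : ℝ :=
  ⨅ φ : {φ : Zd d → Rn n // ∀ z z' : Zd d, φ (z + k • z') = φ z},
    ((k : ℝ) ^ d)⁻¹ * energy1 τ E0 V ω (fun z => F (toRd z) + φ.1 z) (cube d k)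


/-! ### The ergodic theorem for `ℤ^d`-actions -/

/-- The centred lattice cube of radius `N`. -/
def cbox (d N : ℕ) : Finset (Zd d) := Fintype.piFinset fun _ => Finset.Icc (-(N : ℤ)) N

/-- Lattice points of the half-open box `(l,u]`, scaled by `1/ε`. -/
def ebox (ε : ℝ) (l u : Fin d → ℝ) : Finset (Zd d) :=
  Fintype.piFinset fun i => Finset.Ioc ⌊l i / ε⌋ ⌊u i / ε⌋

lemma mem_cbox {N : ℕ} {z : Zd d} : z ∈ cbox d N ↔ ∀ i, -(N : ℤ) ≤ z i ∧ z i ≤ N := by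
  simp [cbox]

lemma mem_ebox {ε : ℝ} (hε : 0 < ε) {l u : Fin d → ℝ} {z : Zd d} :
    z ∈ ebox ε l u ↔ ∀ i, l i < ε * z i ∧ ε * z i ≤ u i := by
  simp only [ebox, Fintype.mem_piFinset, Finset.mem_Ioc, Int.floor_lt, Int.le_floor,
    div_lt_iff₀ hε, le_div_iff₀ hε, mul_comm]

lemma card_cbox (N : ℕ) : (cbox d N).card = (2 * N + 1) ^ d := by
  simp only [cbox, Fintype.card_piFinset, Int.card_Icc, Finset.prod_const, Finset.card_univ,
    Fintype.card_fin]
  congr 1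
  omega

lemma cbox_closedBall {N : ℕ} {z y : Zd d} :
    y ∈ closedBall z (N : ℝ) ↔ y - z ∈ cbox d N := by
  rw [mem_closedBall, dist_pi_le_iff (by positivity), mem_cbox]
  refine forall_congr' fun i => ?_
  rw [Int.dist_eq, abs_le]
  simp only [Pi.sub_apply]
  constructor
  · rintro ⟨h1, h2⟩
    constructor
    · exact_mod_cast h1
    · exact_mod_cast h2
  · rintro ⟨h1, h2⟩
    constructor
    · exact_mod_cast h1
    · exact_mod_cast h2

lemma vitali_count (F : Zd d → ℝ) (hF : ∀ z, 0 ≤ F z) (t : ℝ) (ht : 0 < t)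
    (S T : Finset (Zd d)) (r : Zd d → ℕ) (hr : ∀ z ∈ S, 1 ≤ r z)
    (hT : ∀ z ∈ S, ∀ y ∈ cbox d (r z), z + y ∈ T)
    (hS : ∀ z ∈ S, t * (r z : ℝ) ^ d < ∑ y ∈ cbox d (r z), F (z + y)) :
    t * S.card ≤ 9 ^ d * ∑ z ∈ T, F z := by
  obtain ⟨U, hUS, hUd, hUc⟩ := Vitali.exists_disjoint_subfamily_covering_enlargement_closedBall
    (S : Set (Zd d)) (fun z => z) (fun z => (r z : ℝ)) (∑ z ∈ S, (r z : ℝ))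
    (fun a ha => Finset.single_le_sum (f := fun z => (r z : ℝ)) (fun _ _ => by positivity) ha) 4 (by norm_num)
  have hUf : U.Finite := S.finite_toSet.subset hUS
  set V : Finset (Zd d) := hUf.toFinset
  have hVU : ∀ z, z ∈ V ↔ z ∈ U := fun z => hUf.mem_toFinset
  have hVS : ∀ z ∈ V, z ∈ S := fun z hz => hUS ((hVU z).1 hz)
  have h1 : S ⊆ V.biUnion fun z => (cbox d (4 * r z)).image fun y => z + y := by
    intro a ha
    obtain ⟨b, hb, hab⟩ := hUc a ha
    have : a ∈ closedBall b (((4 * r b : ℕ) : ℝ)) := by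
      have := hab (mem_closedBall_self (by positivity))
      simpa using this
    rw [cbox_closedBall] at this
    simp only [Finset.mem_biUnion, Finset.mem_image]
    exact ⟨b, (hVU b).2 hb, a - b, this, by abel⟩
  have h2 : (S.card : ℝ) ≤ ∑ z ∈ V, 9 ^ d * (r z : ℝ) ^ d := by
    have : S.card ≤ ∑ z ∈ V, (9 * r z) ^ d := by
      refine (Finset.card_le_card h1).trans (Finset.card_biUnion_le.trans ?_)
      refine Finset.sum_le_sum fun z hz => Finset.card_image_le.trans ?_
      rw [card_cbox]
      have := hr z (hVS z hz)
      exact Nat.pow_le_pow_left (by omega) d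
    calc (S.card : ℝ) ≤ ((∑ z ∈ V, (9 * r z) ^ d : ℕ) : ℝ) := by exact_mod_cast this
      _ = _ := by push_cast; simp only [mul_pow]
  have h3 : ∑ z ∈ V, ∑ y ∈ cbox d (r z), F (z + y) ≤ ∑ z ∈ T, F z := by
    have e : ∀ z, ∑ y ∈ cbox d (r z), F (z + y) =
        ∑ y ∈ (cbox d (r z)).image (fun y => z + y), F y := by
      intro z
      rw [Finset.sum_image]
      intro a _ b _ hab
      simpa using hab
    simp only [e]
    rw [← Finset.sum_biUnion]
    · refine Finset.sum_le_sum_of_subset_of_nonneg ?_ fun _ _ _ => hF _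
      intro x hx
      simp only [Finset.mem_biUnion, Finset.mem_image] at hx
      obtain ⟨z, hz, y, hy, rfl⟩ := hx
      exact hT z (hVS z hz) y hy
    · intro a ha b hb hab
      have := hUd ((hVU a).1 ha) ((hVU b).1 hb) hab
      rw [Function.onFun, Finset.disjoint_left]
      intro x hxa hxb
      simp only [Finset.mem_image] at hxa hxb
      obtain ⟨y, hy, rfl⟩ := hxa
      obtain ⟨y', hy', he⟩ := hxb
      have m1 : a + y ∈ closedBall a (r a : ℝ) := by rw [cbox_closedBall]; simpa using hy
      have m2 : a + y ∈ closedBall b (r b : ℝ) := by rw [cbox_closedBall, ← he]; simpa using hy'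
      exact Set.disjoint_left.1 this m1 m2
  calc t * S.card ≤ t * ∑ z ∈ V, 9 ^ d * (r z : ℝ) ^ d := by gcongr
    _ = 9 ^ d * ∑ z ∈ V, t * (r z : ℝ) ^ d := by
        rw [Finset.mul_sum, Finset.mul_sum]; refine Finset.sum_congr rfl fun z _ => by ring
    _ ≤ 9 ^ d * ∑ z ∈ V, ∑ y ∈ cbox d (r z), F (z + y) := by
        gcongr with z hz
        exact (hS z (hVS z hz)).le
    _ ≤ _ := by gcongr

/-- The maximal inequality. -/
lemma maximal_ineq (P : Measure Ω) [IsProbabilityMeasure P]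
    (τ : Zd d → Ω → Ω) (hτadd : ∀ x y : Zd d, τ (x + y) = τ x ∘ τ y)
    (hτmp : ∀ z : Zd d, MeasurePreserving (τ z) P P)
    (f : Ω → ℝ) (hfm : Measurable f) (hfi : Integrable f P) (hf0 : ∀ ω, 0 ≤ f ω)
    (t : ℝ) (ht : 0 < t) :
    P {ω | ∃ N : ℕ, 1 ≤ N ∧ t * (N : ℝ) ^ d < ∑ z ∈ cbox d N, f (τ z ω)} ≤
      ENNReal.ofReal (18 ^ d * (∫ ω, f ω ∂P) / t) := by
  set A : ℕ → Set Ω := fun K =>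
    {ω | ∃ N : ℕ, N ≤ K ∧ 1 ≤ N ∧ t * (N : ℝ) ^ d < ∑ z ∈ cbox d N, f (τ z ω)} with hA
  have hAm : ∀ K, MeasurableSet (A K) := by
    intro K
    have : A K = ⋃ N : ℕ, ⋃ _ : N ≤ K ∧ 1 ≤ N,
        {ω | t * (N : ℝ) ^ d < ∑ z ∈ cbox d N, f (τ z ω)} := by
      ext ω; simp [hA, and_assoc]
    rw [this]
    refine MeasurableSet.iUnion fun N => MeasurableSet.iUnion fun _ => ?_
    refine measurableSet_lt measurable_const ?_
    exact Finset.measurable_sum _ fun z _ => hfm.comp (hτmp z).measurable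
  have hmono : Monotone A := by
    intro K K' h ω
    rintro ⟨N, h1, h2⟩
    exact ⟨N, h1.trans h, h2⟩
  have hU : {ω | ∃ N : ℕ, 1 ≤ N ∧ t * (N : ℝ) ^ d < ∑ z ∈ cbox d N, f (τ z ω)} = ⋃ K, A K := by
    ext ω
    simp only [Set.mem_ofPred_eq, mem_iUnion, hA]
    constructor
    · rintro ⟨N, h⟩; exact ⟨N, N, le_rfl, h⟩
    · rintro ⟨K, N, _, h⟩; exact ⟨N, h⟩
  rw [hU, hmono.measure_iUnion]
  refine iSup_le fun K => ?_
  have hpt : ∀ ω, t * ∑ z ∈ cbox d K, (A K).indicator (fun _ => (1 : ℝ)) (τ z ω) ≤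
      9 ^ d * ∑ z ∈ cbox d (2 * K), f (τ z ω) := by
    intro ω
    set S := (cbox d K).filter fun z => τ z ω ∈ A K
    have hch : ∀ z : Zd d, ∃ N : ℕ, z ∈ S →
        N ≤ K ∧ 1 ≤ N ∧ t * (N : ℝ) ^ d < ∑ y ∈ cbox d N, f (τ y (τ z ω)) := by
      intro z
      by_cases hz : z ∈ S
      · obtain ⟨N, h⟩ := (Finset.mem_filter.1 hz).2
        exact ⟨N, fun _ => h⟩
      · exact ⟨0, fun h => absurd h hz⟩
    choose r hr using hch
    have := vitali_count (fun z => f (τ z ω)) (fun z => hf0 _) t ht S (cbox d (2 * K)) r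
      (fun z hz => (hr z hz).2.1) ?_ ?_
    · refine le_trans (le_of_eq ?_) this
      congr 1
      simp only [Set.indicator_apply]
      rw [Finset.sum_ite]
      simp [S]
    · intro z hz y hy
      have h1 := mem_cbox.1 (Finset.mem_filter.1 hz).1
      have h2 := mem_cbox.1 hy
      have h3 := (hr z hz).1
      rw [mem_cbox]
      intro i
      have := h1 i
      have := h2 i
      simp only [Pi.add_apply]
      push_cast
      omega
    · intro z hz
      refine (hr z hz).2.2.trans_le (le_of_eq ?_)
      refine Finset.sum_congr rfl fun y _ => ?_
      rw [add_comm z y, hτadd]; rfl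
  have hIntg : ∀ z, Integrable (fun ω => f (τ z ω)) P := fun z =>
    (hτmp z).integrable_comp_of_integrable hfi
  have hintA : ∀ z, Integrable (fun ω => (A K).indicator (fun _ => (1 : ℝ)) (τ z ω)) P := fun z =>
    (hτmp z).integrable_comp_of_integrable ((integrable_const (1 : ℝ)).indicator (hAm K))
  have hinteq : ∀ (z : Zd d) (g : Ω → ℝ), Measurable g → ∫ ω, g (τ z ω) ∂P = ∫ ω, g ω ∂P := by
    intro z g hg
    conv_rhs => rw [← (hτmp z).map_eq]
    rw [integral_map (hτmp z).measurable.aemeasurable hg.aestronglyMeasurable]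
  have hI := integral_mono ((integrable_finsetSum _ fun z _ => hintA z).const_mul t)
    ((integrable_finsetSum _ fun z _ => hIntg z).const_mul (9 ^ d)) hpt
  rw [integral_const_mul, integral_const_mul, integral_finsetSum _ (fun z _ => hintA z),
    integral_finsetSum _ (fun z _ => hIntg z)] at hI
  rw [Finset.sum_congr rfl (fun z _ => hinteq z _ hfm),
    Finset.sum_congr rfl (fun z _ => hinteq z _ (measurable_const.indicator (hAm K)))] at hI
  rw [integral_indicator_const _ (hAm K)] at hI
  simp only [Finset.sum_const, card_cbox, nsmul_eq_mul, smul_eq_mul, mul_one] at hI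
  rw [← ENNReal.ofReal_toReal (measure_ne_top P (A K))]
  refine ENNReal.ofReal_le_ofReal ?_
  rw [le_div_iff₀ ht]
  have hf : 0 ≤ ∫ ω, f ω ∂P := integral_nonneg hf0
  have hK : ((2 * (2 * K) + 1 : ℝ)) ^ d ≤ 2 ^ d * (2 * K + 1 : ℝ) ^ d := by
    rw [← mul_pow]
    gcongr
    linarith
  have hpos : (0 : ℝ) < (2 * K + 1 : ℝ) ^ d := by positivity
  refine le_of_mul_le_mul_left ?_ hpos
  push_cast at hI
  calc (2 * K + 1 : ℝ) ^ d * ((P (A K)).toReal * t)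
      = t * ((2 * K + 1 : ℝ) ^ d * P.real (A K)) := by rw [Measure.real]; ring
    _ ≤ _ := hI
    _ ≤ 9 ^ d * (2 ^ d * (2 * K + 1 : ℝ) ^ d * ∫ ω, f ω ∂P) := by gcongr
    _ = (2 * K + 1 : ℝ) ^ d * (18 ^ d * ∫ ω, f ω ∂P) := by
      rw [show (18 : ℝ) = 9 * 2 by norm_num, mul_pow]; ring

/-- Convergence of the spatial averages over all boxes. -/
def ErgConv (τ : Zd d → Ω → Ω) (f : Ω → ℝ) (I : ℝ) (ω : Ω) : Prop :=
  ∀ l u : Fin d → ℝ, (∀ i, l i < u i) →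
    Tendsto (fun ε : ℝ => ε ^ d * ∑ z ∈ ebox ε l u, f (τ z ω)) (𝓝[>] 0)
      (𝓝 ((∏ i, (u i - l i)) * I))

/-- Almost sure convergence of the spatial averages to the mean. -/
def GoodF (P : Measure Ω) (τ : Zd d → Ω → Ω) (f : Ω → ℝ) : Prop :=
  ∀ᵐ ω ∂P, ErgConv τ f (∫ ω, f ω ∂P) ω

lemma tendsto_eps_floor (x : ℝ) : Tendsto (fun ε : ℝ => ε * (⌊x / ε⌋ : ℝ)) (𝓝[>] 0) (𝓝 x) := by
  have h0 : Tendsto (fun ε : ℝ => x - ε) (𝓝[>] 0) (𝓝 x) := by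
    have : Tendsto (fun ε : ℝ => x - ε) (𝓝 0) (𝓝 (x - 0)) := by
      exact (continuous_const.sub continuous_id).tendsto 0
    rw [sub_zero] at this
    exact this.mono_left nhdsWithin_le_nhds
  refine tendsto_of_tendsto_of_tendsto_of_le_of_le' h0 tendsto_const_nhds ?_ ?_
  · filter_upwards [self_mem_nhdsWithin] with ε hε
    have hε : 0 < ε := hε
    have h := (Int.sub_one_lt_floor (x / ε)).le
    have := mul_le_mul_of_nonneg_left h hε.le
    rw [mul_sub, mul_div_cancel₀ _ hε.ne'] at this
    linarith
  · filter_upwards [self_mem_nhdsWithin] with ε hε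
    have hε : 0 < ε := hε
    have h := Int.floor_le (x / ε)
    have := mul_le_mul_of_nonneg_left h hε.le
    rwa [mul_div_cancel₀ _ hε.ne'] at this

lemma card_ebox {ε : ℝ} (hε : 0 < ε) {l u : Fin d → ℝ} (h : ∀ i, l i < u i) :
    ε ^ d * ((ebox ε l u).card : ℝ) = ∏ i, (ε * (⌊u i / ε⌋ : ℝ) - ε * (⌊l i / ε⌋ : ℝ)) := by
  simp only [ebox, Fintype.card_piFinset, Int.card_Ioc]
  push_cast
  have : ε ^ d = ∏ _i : Fin d, ε := by simp
  rw [this, ← Finset.prod_mul_distrib]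
  refine Finset.prod_congr rfl fun i _ => ?_
  rw [← mul_sub]
  congr 1
  have h1 : ⌊l i / ε⌋ ≤ ⌊u i / ε⌋ := Int.floor_le_floor (by
    exact div_le_div_of_nonneg_right (h i).le hε.le)
  have h2 : ((⌊u i / ε⌋ - ⌊l i / ε⌋).toNat : ℤ) = ⌊u i / ε⌋ - ⌊l i / ε⌋ :=
    Int.toNat_of_nonneg (by omega)
  have h3 : (((⌊u i / ε⌋ - ⌊l i / ε⌋).toNat : ℤ) : ℝ) = ((⌊u i / ε⌋ - ⌊l i / ε⌋ : ℤ) : ℝ) := by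
    rw [h2]
  push_cast at h3
  exact h3

lemma tendsto_card_ebox {l u : Fin d → ℝ} (h : ∀ i, l i < u i) :
    Tendsto (fun ε : ℝ => ε ^ d * ((ebox ε l u).card : ℝ)) (𝓝[>] 0) (𝓝 (∏ i, (u i - l i))) := by
  have : Tendsto (fun ε : ℝ => ∏ i, (ε * (⌊u i / ε⌋ : ℝ) - ε * (⌊l i / ε⌋ : ℝ))) (𝓝[>] 0)
      (𝓝 (∏ i, (u i - l i))) :=
    tendsto_finsetProd _ fun i _ => (tendsto_eps_floor _).sub (tendsto_eps_floor _)
  refine this.congr' ?_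
  filter_upwards [self_mem_nhdsWithin] with ε hε
  exact (card_ebox hε h).symm

lemma exists_shrink {l u : Fin d → ℝ} (h : ∀ i, l i < u i) (η : ℝ) (hη : 0 < η) :
    ∃ γ : ℝ, 0 < γ ∧ (∀ i, l i + γ < u i - γ) ∧
      |(∏ i, (u i - l i)) - ∏ i, ((u i - γ) - (l i + γ))| < η := by
  have c1 : Tendsto (fun γ : ℝ => |(∏ i, (u i - l i)) - ∏ i, ((u i - γ) - (l i + γ))|) (𝓝[>] 0)
      (𝓝 0) := by
    have : Continuous (fun γ : ℝ => |(∏ i, (u i - l i)) - ∏ i, ((u i - γ) - (l i + γ))|) := by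
      fun_prop
    have := this.tendsto 0
    simp only [sub_zero, add_zero, sub_self, abs_zero] at this
    exact this.mono_left nhdsWithin_le_nhds
  have c2 : ∀ i, ∀ᶠ γ in 𝓝[>] (0 : ℝ), l i + γ < u i - γ := by
    intro i
    refine Filter.Eventually.filter_mono nhdsWithin_le_nhds ?_
    have h1 : Continuous fun γ : ℝ => l i + γ := by fun_prop
    have h2 : Continuous fun γ : ℝ => u i - γ := by fun_prop
    exact h1.continuousAt.eventually_lt h2.continuousAt (by simpa using h i)
  have c3 := (c1.eventually_lt_const hη).and (eventually_all.2 c2)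
  obtain ⟨γ, ⟨h1, h2⟩, h3⟩ := (c3.and self_mem_nhdsWithin).exists
  exact ⟨γ, h3, h2, h1⟩

lemma goodF_congr {P : Measure Ω} {τ : Zd d → Ω → Ω}
    (hτmp : ∀ z : Zd d, MeasurePreserving (τ z) P P) {f g : Ω → ℝ} (h : f =ᵐ[P] g)
    (hf : GoodF P τ f) : GoodF P τ g := by
  have h1 : ∀ᵐ ω ∂P, ∀ z, f (τ z ω) = g (τ z ω) :=
    ae_all_iff.2 fun z => (hτmp z).quasiMeasurePreserving.ae h
  unfold GoodF at *
  filter_upwards [h1, hf] with ω h1 h2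
  intro l u hlu
  have := h2 l u hlu
  rw [integral_congr_ae h] at this
  simpa only [h1] using this

lemma goodF_const (P : Measure Ω) [IsProbabilityMeasure P] (τ : Zd d → Ω → Ω) (c : ℝ) :
    GoodF P τ fun _ => c := by
  refine Eventually.of_forall fun ω l u hlu => ?_
  simp only [Finset.sum_const, nsmul_eq_mul, ← mul_assoc, integral_const, probReal_univ,
    smul_eq_mul, one_mul]
  exact (tendsto_card_ebox hlu).mul_const c

lemma goodF_add {P : Measure Ω} {τ : Zd d → Ω → Ω} {f g : Ω → ℝ}
    (hfi : Integrable f P) (hgi : Integrable g P) (hf : GoodF P τ f) (hg : GoodF P τ g) :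
    GoodF P τ (fun ω => f ω + g ω) := by
  unfold GoodF at *
  filter_upwards [hf, hg] with ω h1 h2
  intro l u hlu
  rw [integral_add hfi hgi, mul_add]
  simp only [Finset.sum_add_distrib, mul_add]
  exact (h1 l u hlu).add (h2 l u hlu)

lemma goodF_smul {P : Measure Ω} {τ : Zd d → Ω → Ω} {f : Ω → ℝ} (c : ℝ)
    (hf : GoodF P τ f) : GoodF P τ (fun ω => c * f ω) := by
  unfold GoodF at *
  filter_upwards [hf] with ω h1
  intro l u hlu
  rw [integral_const_mul]
  simp only [← Finset.mul_sum, mul_left_comm _ c]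
  exact (h1 l u hlu).const_mul c

lemma shrink_subset {ε γ : ℝ} (hε : 0 < ε) {l u : Fin d → ℝ} (y : Zd d)
    (hy : ∀ i, ε * |(y i : ℝ)| ≤ γ) {z : Zd d}
    (hz : z ∈ ebox ε (fun i => l i + γ) (fun i => u i - γ)) : z + y ∈ ebox ε l u := by
  rw [mem_ebox hε] at hz ⊢
  intro i
  have h1 := hz i
  have h2 := hy i
  have h3 : ε * (y i : ℝ) ≤ ε * |(y i : ℝ)| := by gcongr; exact le_abs_self _
  have h4 : -(ε * |(y i : ℝ)|) ≤ ε * (y i : ℝ) := by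
    have := mul_le_mul_of_nonneg_left (neg_abs_le (y i : ℝ)) hε.le
    linarith
  simp only [Pi.add_apply, Int.cast_add, mul_add]
  constructor <;> linarith

lemma eventually_small (c γ : ℝ) (hγ : 0 < γ) : ∀ᶠ ε in 𝓝[>] (0 : ℝ), ε * c ≤ γ := by
  refine Filter.Eventually.filter_mono nhdsWithin_le_nhds ?_
  have h1 : Continuous fun ε : ℝ => ε * c := by fun_prop
  have := h1.continuousAt.eventually_lt (continuousAt_const (y := γ)) (x₀ := 0) (by simpa using hγ)
  exact this.mono fun _ h => h.le

lemma goodF_cob (P : Measure Ω) [IsProbabilityMeasure P] {τ : Zd d → Ω → Ω}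
    (hτadd : ∀ x y : Zd d, τ (x + y) = τ x ∘ τ y)
    (hτmp : ∀ z : Zd d, MeasurePreserving (τ z) P P) (h : Ω → ℝ) (hm : Measurable h) (C : ℝ)
    (hC : ∀ ω, |h ω| ≤ C) (y : Zd d) : GoodF P τ (fun ω => h ω - h (τ y ω)) := by
  have hi : Integrable h P := Integrable.of_bound hm.aestronglyMeasurable C
    (Eventually.of_forall hC)
  have hi' : Integrable (fun ω => h (τ y ω)) P := (hτmp y).integrable_comp_of_integrable hi
  have h0 : ∫ ω, (h ω - h (τ y ω)) ∂P = 0 := by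
    rw [integral_sub hi hi']
    conv_lhs => rw [← (hτmp y).map_eq]
    rw [integral_map (hτmp y).measurable.aemeasurable hm.aestronglyMeasurable,
      (hτmp y).map_eq, sub_self]
  refine Eventually.of_forall fun ω l u hlu => ?_
  rw [h0, mul_zero]
  have hC0 : 0 ≤ C := (abs_nonneg _).trans (hC ω)
  rw [Metric.tendsto_nhds]
  intro η hη
  obtain ⟨γ, hγ, hlu', hsm⟩ := exists_shrink hlu (η / (4 * (C + 1))) (by positivity)
  have ht := ((tendsto_card_ebox hlu).sub (tendsto_card_ebox hlu')).eventually_lt_const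
    (lt_of_abs_lt hsm)
  have hsmall : ∀ i, ∀ᶠ ε in 𝓝[>] (0 : ℝ), ε * |(y i : ℝ)| ≤ γ := fun i => eventually_small _ _ hγ
  filter_upwards [ht, eventually_all.2 hsmall, self_mem_nhdsWithin] with ε h1 h2 hε
  have hε : 0 < ε := hε
  set B := ebox ε l u
  set D := ebox ε (fun i => l i + γ) (fun i => u i - γ)
  have key : ∀ (y' : Zd d) (a : Zd d → ℝ), (∀ z, |a z| ≤ C) → (∀ i, ε * |(y' i : ℝ)| ≤ γ) →
      |∑ z ∈ B, a z - ∑ z ∈ D, a (z + y')| ≤ C * ((B.card : ℝ) - D.card) := by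
    intro y' a ha hy'
    have hinj : Function.Injective (fun z : Zd d => z + y') := fun p q h => by simpa using h
    have hsub : D.image (fun z => z + y') ⊆ B := by
      intro x hx
      obtain ⟨z, hz, rfl⟩ := Finset.mem_image.1 hx
      exact shrink_subset hε y' hy' hz
    have hcard : (D.image (fun z => z + y')).card = D.card := Finset.card_image_of_injective _ hinj
    rw [← Finset.sum_image (f := a) (g := fun z => z + y') (fun p _ q _ h => hinj h),
      ← Finset.sum_sdiff hsub, add_sub_cancel_right]
    refine (Finset.abs_sum_le_sum_abs _ _).trans ((Finset.sum_le_sum fun z _ => ha z).trans ?_)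
    rw [Finset.sum_const, nsmul_eq_mul, Finset.card_sdiff_of_subset hsub, hcard,
      Nat.cast_sub (hcard ▸ Finset.card_le_card hsub), mul_comm]
  have k1 := key 0 (fun z => h (τ z ω)) (fun z => hC _) (fun i => by simpa using hγ.le)
  have k2 := key (-y) (fun z => h (τ y (τ z ω))) (fun z => hC _) (fun i => by simpa using h2 i)
  have e2 : ∑ z ∈ D, h (τ y (τ (z + -y) ω)) = ∑ z ∈ D, h (τ z ω) := by
    refine Finset.sum_congr rfl fun z _ => ?_
    have : τ z = τ y ∘ τ (z + -y) := by rw [← hτadd]; congr 1; abel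
    rw [this]; rfl
  simp only [e2] at k2
  simp only [add_zero] at k1
  rw [dist_zero_right, Real.norm_eq_abs, abs_mul, abs_of_pos (pow_pos hε d),
    Finset.sum_sub_distrib]
  have k3 : |∑ z ∈ B, h (τ z ω) - ∑ z ∈ B, h (τ y (τ z ω))| ≤ 2 * C * ((B.card : ℝ) - D.card) := by
    rw [abs_le] at k1 k2 ⊢
    constructor <;> linarith [k1.1, k1.2, k2.1, k2.2]
  calc ε ^ d * |∑ z ∈ B, h (τ z ω) - ∑ z ∈ B, h (τ y (τ z ω))|
      ≤ ε ^ d * (2 * C * ((B.card : ℝ) - D.card)) := by gcongr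
    _ = 2 * C * (ε ^ d * B.card - ε ^ d * D.card) := by ring
    _ ≤ 2 * C * (η / (4 * (C + 1))) := by gcongr
    _ < η := by
      rw [mul_div_assoc', div_lt_iff₀ (by positivity)]
      nlinarith

lemma box_le_max {τ : Zd d → Ω → Ω} (F : Ω → ℝ) (hF : ∀ ω, 0 ≤ F ω) (l u : Fin d → ℝ) :
    ∃ D : ℝ, 0 < D ∧ ∀ (ω : Ω) (t : ℝ), 0 ≤ t →
      (∀ N : ℕ, 1 ≤ N → ∑ z ∈ cbox d N, F (τ z ω) ≤ t * (N : ℝ) ^ d) →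
      ∀ ε : ℝ, 0 < ε → ε ≤ 1 → ε ^ d * ∑ z ∈ ebox ε l u, F (τ z ω) ≤ D * t := by
  set E : ℝ := 1 + ∑ i, (|l i| + |u i|)
  have hE1 : 1 ≤ E := le_add_of_nonneg_right (Finset.sum_nonneg fun i _ => by positivity)
  refine ⟨(E + 1) ^ d, by positivity, fun ω t ht hN ε hε hε1 => ?_⟩
  set N := ⌈E / ε⌉₊
  have hN1 : 1 ≤ N := Nat.ceil_pos.2 (by positivity)
  have hle : E / ε ≤ N := Nat.le_ceil _
  have hlt : (N : ℝ) < E / ε + 1 := Nat.ceil_lt_add_one (by positivity)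
  have hsub : ebox ε l u ⊆ cbox d N := by
    intro z hz
    rw [mem_ebox hε] at hz
    rw [mem_cbox]
    intro i
    have hi : |l i| + |u i| ≤ E := by
      have := Finset.single_le_sum (f := fun i => |l i| + |u i|) (fun _ _ => by positivity)
        (Finset.mem_univ i)
      simp only [E]
      linarith
    have h1 := hz i
    have hz1 : |ε * (z i : ℝ)| ≤ E := by
      rw [abs_le]
      constructor
      · linarith [neg_abs_le (l i), abs_nonneg (u i)]
      · linarith [le_abs_self (u i), abs_nonneg (l i)]
    rw [abs_mul, abs_of_pos hε, mul_comm, ← le_div_iff₀ hε] at hz1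
    have := abs_le.1 (hz1.trans hle)
    constructor
    · exact_mod_cast this.1
    · exact_mod_cast this.2
  calc ε ^ d * ∑ z ∈ ebox ε l u, F (τ z ω) ≤ ε ^ d * ∑ z ∈ cbox d N, F (τ z ω) := by
        gcongr
        exact fun _ _ _ => hF _
    _ ≤ ε ^ d * (t * (N : ℝ) ^ d) := by gcongr; exact hN N hN1
    _ = (ε * N) ^ d * t := by rw [mul_pow]; ring
    _ ≤ (E + 1) ^ d * t := by
        gcongr
        have := mul_le_mul_of_nonneg_left hlt.le hε.le
        rw [mul_add, mul_div_cancel₀ _ hε.ne'] at this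
        linarith

lemma goodF_closure (P : Measure Ω) [IsProbabilityMeasure P] {τ : Zd d → Ω → Ω}
    (hτadd : ∀ x y : Zd d, τ (x + y) = τ x ∘ τ y)
    (hτmp : ∀ z : Zd d, MeasurePreserving (τ z) P P) (f : Ω → ℝ) (hfm : Measurable f)
    (hfi : Integrable f P)
    (hcl : ∀ η : ℝ, 0 < η → ∃ g : Ω → ℝ, Measurable g ∧ Integrable g P ∧ GoodF P τ g ∧
      eLpNorm (fun ω => f ω - g ω) 1 P ≤ ENNReal.ofReal η) : GoodF P τ f := by
  have hcl' : ∀ j : ℕ, ∃ g : Ω → ℝ, Measurable g ∧ Integrable g P ∧ GoodF P τ g ∧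
      ∫ ω, |f ω - g ω| ∂P ≤ 1 / ((j : ℝ) + 1) := by
    intro j
    obtain ⟨g, h1, h2, h3, h4⟩ := hcl (1 / ((j : ℝ) + 1)) (by positivity)
    refine ⟨g, h1, h2, h3, ?_⟩
    have := integral_norm_eq_lintegral_enorm (hfi.sub h2).aestronglyMeasurable
    simp only [Pi.sub_apply, Real.norm_eq_abs] at this
    rw [this]
    rw [eLpNorm_one_eq_lintegral_enorm] at h4
    exact ENNReal.toReal_le_of_le_ofReal (by positivity) h4
  choose g hgm hgi hgG hgI using hcl'
  have hae : ∀ᵐ ω ∂P, ∀ m : ℕ, ∃ j : ℕ, m ≤ j ∧ ∀ N : ℕ, 1 ≤ N →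
      ∑ z ∈ cbox d N, |f (τ z ω) - g j (τ z ω)| ≤ 1 / ((m : ℝ) + 1) * (N : ℝ) ^ d := by
    rw [ae_all_iff]
    intro m
    rw [ae_iff]
    have hle : ∀ j, m ≤ j → P {ω | ¬ ∃ j : ℕ, m ≤ j ∧ ∀ N : ℕ, 1 ≤ N →
      ∑ z ∈ cbox d N, |f (τ z ω) - g j (τ z ω)| ≤ 1 / ((m : ℝ) + 1) * (N : ℝ) ^ d} ≤
        ENNReal.ofReal (18 ^ d * (1 / ((j : ℝ) + 1)) / (1 / ((m : ℝ) + 1))) := by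
      intro j hj
      refine le_trans (measure_mono ?_) ((maximal_ineq P τ hτadd hτmp (fun ω => |f ω - g j ω|)
        ((hfm.sub (hgm j)).abs) (hfi.sub (hgi j)).abs (fun _ => abs_nonneg _)
        (1 / ((m : ℝ) + 1)) (by positivity)).trans ?_)
      · intro ω hω
        simp only [Set.mem_ofPred_eq] at hω ⊢
        by_contra hcon
        refine hω ⟨j, hj, fun N hN => ?_⟩
        by_contra h
        exact hcon ⟨N, hN, not_le.1 h⟩
      · refine ENNReal.ofReal_le_ofReal ?_
        gcongr
        exact hgI j
    have hlim : Tendsto (fun j : ℕ =>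
        ENNReal.ofReal (18 ^ d * (1 / ((j : ℝ) + 1)) / (1 / ((m : ℝ) + 1)))) atTop (𝓝 0) := by
      rw [← ENNReal.ofReal_zero]
      refine ENNReal.tendsto_ofReal ?_
      have := (tendsto_one_div_add_atTop_nhds_zero_nat (𝕜 := ℝ)).const_mul (18 ^ d)
      have := this.div_const (1 / ((m : ℝ) + 1))
      simpa using this
    refine le_antisymm (ge_of_tendsto hlim ?_) zero_le
    filter_upwards [eventually_ge_atTop m] with j hj using hle j hj
  have hGall : ∀ᵐ ω ∂P, ∀ j, ErgConv τ (g j) (∫ ω, g j ω ∂P) ω := ae_all_iff.2 hgG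
  unfold GoodF
  filter_upwards [hae, hGall] with ω h1 h2
  intro l u hlu
  obtain ⟨D1, hD1, hD⟩ : ∃ D : ℝ, 0 < D ∧ ∀ (j : ℕ) (t : ℝ), 0 ≤ t →
      (∀ N : ℕ, 1 ≤ N → ∑ z ∈ cbox d N, |f (τ z ω) - g j (τ z ω)| ≤ t * (N : ℝ) ^ d) →
      ∀ ε : ℝ, 0 < ε → ε ≤ 1 →
        ε ^ d * ∑ z ∈ ebox ε l u, |f (τ z ω) - g j (τ z ω)| ≤ D * t := by
    obtain ⟨D, hD, h⟩ := box_le_max (Ω := Zd d → ℝ) (τ := fun (z : Zd d) (a : Zd d → ℝ) x => a (x + z))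
      (fun a => |a 0|) (fun _ => abs_nonneg _) l u
    refine ⟨D, hD, fun j t ht hN ε hε hε1 => ?_⟩
    have := h (fun z => f (τ z ω) - g j (τ z ω)) t ht
    simp only [zero_add] at this
    exact this hN ε hε hε1
  rw [Metric.tendsto_nhds]
  intro η hη
  have hvol : 0 < ∏ i, (u i - l i) := Finset.prod_pos fun i _ => sub_pos.2 (hlu i)
  set v := ∏ i, (u i - l i)
  obtain ⟨m, hm⟩ := exists_nat_one_div_lt (show (0 : ℝ) < η / (3 * (D1 + v)) by positivity)
  obtain ⟨j, hj, hN⟩ := h1 m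
  have hm1 : D1 * (1 / ((m : ℝ) + 1)) < η / 3 := by
    rw [lt_div_iff₀ (by positivity)] at hm
    have : 0 < v * (1 / ((m : ℝ) + 1)) := by positivity
    linarith
  have hm2 : v * |∫ ω, g j ω ∂P - ∫ ω, f ω ∂P| < η / 3 := by
    have a1 : |∫ ω, g j ω ∂P - ∫ ω, f ω ∂P| ≤ 1 / ((m : ℝ) + 1) := by
      rw [abs_sub_comm, ← integral_sub hfi (hgi j)]
      refine abs_integral_le_integral_abs.trans ((hgI j).trans ?_)
      have : (m : ℝ) ≤ j := by exact_mod_cast hj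
      gcongr
    have a2 : v * |∫ ω, g j ω ∂P - ∫ ω, f ω ∂P| ≤ v * (1 / ((m : ℝ) + 1)) := by gcongr
    rw [lt_div_iff₀ (by positivity)] at hm
    have : 0 < D1 * (1 / ((m : ℝ) + 1)) := by positivity
    linarith
  have h3 := (Metric.tendsto_nhds.1 (h2 j l u hlu)) (η / 3) (by positivity)
  have h4 : ∀ᶠ ε in 𝓝[>] (0 : ℝ), ε ≤ 1 := by
    simpa using eventually_small 1 1 one_pos
  filter_upwards [h3, h4, self_mem_nhdsWithin] with ε h3 h4 hε
  have hε : 0 < ε := hε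
  have h5 := hD j _ (by positivity) hN ε hε h4
  rw [Real.dist_eq] at h3 ⊢
  have h6 : |ε ^ d * ∑ z ∈ ebox ε l u, f (τ z ω) - ε ^ d * ∑ z ∈ ebox ε l u, g j (τ z ω)| ≤
      D1 * (1 / ((m : ℝ) + 1)) := by
    rw [← mul_sub, ← Finset.sum_sub_distrib, abs_mul, abs_of_pos (pow_pos hε d)]
    refine le_trans ?_ h5
    gcongr
    exact Finset.abs_sum_le_sum_abs _ _
  have h7 : |v * ∫ ω, g j ω ∂P - v * ∫ ω, f ω ∂P| < η / 3 := by
    rw [← mul_sub, abs_mul, abs_of_pos hvol]; exact hm2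
  rw [abs_lt] at h3 h7 ⊢
  rw [abs_le] at h6
  constructor <;> linarith [h3.1, h3.2, h7.1, h7.2, h6.1, h6.2]

lemma ae_invariant_set (P : Measure Ω) [IsProbabilityMeasure P] {τ : Zd d → Ω → Ω}
    (hτadd : ∀ x y : Zd d, τ (x + y) = τ x ∘ τ y)
    (hτmp : ∀ z : Zd d, MeasurePreserving (τ z) P P)
    (hτ0 : τ 0 = id)
    (hτerg : ∀ B : Set Ω, MeasurableSet B → (∀ z : Zd d, τ z ⁻¹' B = B) → P B = 0 ∨ P B = 1)
    (f : Ω → ℝ) (hfm : Measurable f) (hinv : ∀ z, (fun ω => f (τ z ω)) =ᵐ[P] f) :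
    (∀ᵐ ω ∂P, f ω ≤ 0) ∨ (∀ᵐ ω ∂P, 0 < f ω) := by
  set B : Set Ω := {ω | ∀ z, 0 < f (τ z ω)} with hB
  have hBm : MeasurableSet B := by
    have : B = ⋂ z, {ω | 0 < f (τ z ω)} := by ext; simp [hB]
    rw [this]
    exact MeasurableSet.iInter fun z => measurableSet_lt measurable_const
      (hfm.comp (hτmp z).measurable)
  have hBi : ∀ z : Zd d, τ z ⁻¹' B = B := by
    intro z
    ext ω
    simp only [hB, Set.mem_preimage, Set.mem_ofPred_eq]
    constructor
    · intro h y
      have := h (y - z)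
      rwa [← Function.comp_apply (f := τ (y - z)), ← hτadd, sub_add_cancel] at this
    · intro h y
      have := h (y + z)
      rwa [hτadd] at this
  have hall : ∀ᵐ ω ∂P, ∀ z, f (τ z ω) = f ω := ae_all_iff.2 hinv
  rcases hτerg B hBm hBi with h | h
  · left
    have : ∀ᵐ ω ∂P, ω ∉ B := measure_eq_zero_iff_ae_notMem.1 h
    filter_upwards [this, hall] with ω h1 h2
    by_contra hcon
    exact h1 fun z => by rw [h2]; exact not_le.1 hcon
  · right
    have : ∀ᵐ ω ∂P, ω ∈ B := (prob_compl_eq_zero_iff hBm).2 h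
    filter_upwards [this] with ω h1
    have := h1 0
    rwa [hτ0] at this

/-- The pointwise ergodic theorem for `ℤ^d`-actions. -/
theorem ergodic_theorem (P : Measure Ω) [IsProbabilityMeasure P] {τ : Zd d → Ω → Ω}
    (hτ0 : τ 0 = id)
    (hτadd : ∀ x y : Zd d, τ (x + y) = τ x ∘ τ y)
    (hτmp : ∀ z : Zd d, MeasurePreserving (τ z) P P)
    (hτerg : ∀ B : Set Ω, MeasurableSet B → (∀ z : Zd d, τ z ⁻¹' B = B) → P B = 0 ∨ P B = 1)
    (f : Ω → ℝ) (hfm : Measurable f) (hfi : Integrable f P) : GoodF P τ f := by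
  -- `L²` coboundaries
  have hcob : ∀ (h : Ω → ℝ), Measurable h → Integrable h P → ∀ y,
      GoodF P τ (fun ω => h ω - h (τ y ω)) := by
    intro h hm hi y
    refine goodF_closure P hτadd hτmp _ (hm.sub (hm.comp (hτmp y).measurable))
      (hi.sub ((hτmp y).integrable_comp_of_integrable hi)) fun η hη => ?_
    obtain ⟨g, hg, hg'⟩ := (memLp_one_iff_integrable.2 hi).exists_simpleFunc_eLpNorm_sub_lt
      (by simp) (ε := ENNReal.ofReal (η / 2)) (by simpa using hη)
    have hgi : Integrable g P := memLp_one_iff_integrable.1 hg'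
    obtain ⟨C, hC⟩ := g.exists_forall_norm_le
    refine ⟨fun ω => g ω - g (τ y ω), g.measurable.sub (g.measurable.comp (hτmp y).measurable),
      hgi.sub ((hτmp y).integrable_comp_of_integrable hgi),
      goodF_cob P hτadd hτmp g g.measurable C hC y, ?_⟩
    have e : (fun ω => h ω - h (τ y ω) - (g ω - g (τ y ω))) =
        (h - ⇑g) - (h - ⇑g) ∘ τ y := by
      ext ω; simp only [Pi.sub_apply, Function.comp_apply]; ring
    rw [e]
    have hs : AEStronglyMeasurable (h - ⇑g) P :=
      (hm.sub g.measurable).aestronglyMeasurable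
    refine (eLpNorm_sub_le hs (hs.comp_measurePreserving (hτmp y)) le_rfl).trans ?_
    rw [eLpNorm_comp_measurePreserving hs (hτmp y)]
    refine (add_le_add hg.le hg.le).trans (le_of_eq ?_)
    rw [← ENNReal.ofReal_add (by positivity) (by positivity), add_halves]
  have hL2m : ∀ f : Lp ℝ 2 P, Measurable f := fun f => (Lp.stronglyMeasurable f).measurable
  have hL2i : ∀ f : Lp ℝ 2 P, Integrable f P := fun f =>
    (Lp.memLp f).integrable (by norm_num)
  let S : Submodule ℝ (Lp ℝ 2 P) :=
    { carrier := {f | GoodF P τ f}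
      add_mem' := by
        intro a b ha hb
        exact goodF_congr hτmp (Lp.coeFn_add a b).symm (goodF_add (hL2i a) (hL2i b) ha hb)
      zero_mem' := by
        exact goodF_congr hτmp (Lp.coeFn_zero ℝ 2 P).symm (goodF_const P τ 0)
      smul_mem' := by
        intro c a ha
        exact goodF_congr hτmp (Lp.coeFn_smul c a).symm (goodF_smul c ha) }
  have hSmem : ∀ f : Lp ℝ 2 P, f ∈ S ↔ GoodF P τ f := fun _ => Iff.rfl
  have hScl : IsClosed (S : Set (Lp ℝ 2 P)) := by
    refine isClosed_of_closure_subset fun f hf => ?_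
    refine goodF_closure P hτadd hτmp f (hL2m f) (hL2i f) fun η hη => ?_
    obtain ⟨g, hg, hfg⟩ := Metric.mem_closure_iff.1 hf η hη
    refine ⟨g, hL2m g, hL2i g, hg, ?_⟩
    have h1 : eLpNorm (fun ω => f ω - g ω) 1 P ≤ eLpNorm (⇑f - ⇑g) 2 P :=
      eLpNorm_le_eLpNorm_of_exponent_le (by norm_num)
        ((hL2m f).sub (hL2m g)).aestronglyMeasurable
    refine h1.trans ?_
    rw [Lp.dist_def] at hfg
    rw [← ENNReal.ofReal_toReal (a := eLpNorm (⇑f - ⇑g) 2 P)]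
    · exact ENNReal.ofReal_le_ofReal hfg.le
    · exact ((Lp.memLp f).sub (Lp.memLp g)).eLpNorm_ne_top
  have hStop : S = ⊤ := by
    have : CompleteSpace S := hScl.completeSpace_coe
    rw [← Submodule.orthogonal_eq_bot_iff, Submodule.eq_bot_iff]
    intro f hf
    rw [Submodule.mem_orthogonal] at hf
    have hinv : ∀ z, (fun ω => f (τ z ω)) =ᵐ[P] f := by
      intro z
      set U := Lp.compMeasurePreserving (p := 2) (E := ℝ) (τ z) (hτmp z) f with hU
      have hUc : ⇑U =ᵐ[P] f ∘ τ z := Lp.coeFn_compMeasurePreserving f (hτmp z)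
      have hmem : f - U ∈ S := by
        rw [hSmem]
        refine goodF_congr hτmp ?_ (hcob f (hL2m f) (hL2i f) z)
        filter_upwards [Lp.coeFn_sub f U, hUc] with ω h1 h2
        rw [h1, Pi.sub_apply, h2]; rfl
      have h0 := hf _ hmem
      have hn : ‖U‖ = ‖f‖ := Lp.norm_compMeasurePreserving f (hτmp z)
      have : ‖f - U‖ ^ 2 = 0 := by
        rw [inner_sub_left, real_inner_self_eq_norm_sq] at h0
        rw [norm_sub_sq_real, hn, real_inner_comm]
        linarith
      have : f - U = 0 := by
        rw [← norm_eq_zero]; exact pow_eq_zero_iff (two_ne_zero) |>.1 this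
      have hfU : f = U := sub_eq_zero.1 this
      have hc2 : ⇑f =ᵐ[P] f ∘ τ z := by
        conv_lhs => rw [hfU]
        exact hUc
      exact hc2.symm
    have hint0 : ∫ ω, f ω ∂P = 0 := by
      have hone : MemLp (fun _ : Ω => (1 : ℝ)) 2 P := memLp_const 1
      have hmem : hone.toLp _ ∈ S := by
        rw [hSmem]
        exact goodF_congr hτmp hone.coeFn_toLp.symm (goodF_const P τ 1)
      have := hf _ hmem
      rw [L2.inner_def] at this
      rw [← this]
      refine integral_congr_ae ?_
      filter_upwards [hone.coeFn_toLp] with ω h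
      rw [h]; simp
    have hz : ⇑f =ᵐ[P] 0 := by
      rcases ae_invariant_set P hτadd hτmp hτ0 hτerg f (hL2m f) hinv with h | h
      · have := (integral_eq_zero_iff_of_nonneg_ae (f := fun ω => - f ω) (μ := P)
          (by filter_upwards [h] with ω h; simpa using h) (hL2i f).neg).1
          (by rw [integral_neg, hint0, neg_zero])
        filter_upwards [this] with ω h
        simpa using h
      · exact (integral_eq_zero_iff_of_nonneg_ae
          (by filter_upwards [h] with ω h; exact h.le) (hL2i f)).1 hint0
    exact (Lp.eq_zero_iff_ae_eq_zero).2 hz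
  have hL2 : ∀ f : Lp ℝ 2 P, GoodF P τ f := fun f => by
    rw [← hSmem, hStop]; trivial
  refine goodF_closure P hτadd hτmp f hfm hfi fun η hη => ?_
  obtain ⟨g, hg, hg'⟩ := (memLp_one_iff_integrable.2 hfi).exists_simpleFunc_eLpNorm_sub_lt
      (by simp) (ε := ENNReal.ofReal η) (by simpa using hη)
  have hg2 : MemLp g 2 P := g.memLp_of_isFiniteMeasure 2 P
  exact ⟨g, g.measurable, memLp_one_iff_integrable.1 hg',
    goodF_congr hτmp hg2.coeFn_toLp (hL2 (hg2.toLp _)), hg.le⟩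

/-! ### Cell problems -/

/-- The hypotheses that are used in the construction. -/
structure Hyp (P : Measure Ω) (τ : Zd d → Ω → Ω) (E0 : Finset (Zd d)) (p c₁ : ℝ)
    (V : Zd d → Ω → Rn n → ℝ) (lam : Zd d → Ω → ℝ) : Prop where
  hd : 0 < d
  hτ0 : τ 0 = id
  hτadd : ∀ x y : Zd d, τ (x + y) = τ x ∘ τ y
  hτmp : ∀ z : Zd d, MeasurePreserving (τ z) P P
  hE00 : (0 : Zd d) ∉ E0
  hp : 1 < p
  hc₁ : 0 < c₁
  hVmeas : ∀ b ∈ E0, Measurable fun q : Ω × Rn n => V b q.1 q.2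
  hVcont : ∀ b ∈ E0, ∀ ω : Ω, Continuous (V b ω)
  hVnn : ∀ b ∈ E0, ∀ (ω : Ω) (r : Rn n), 0 ≤ V b ω r
  hlammeas : ∀ b ∈ E0, Measurable (lam b)
  hlamnn : ∀ b ∈ E0, ∀ ω : Ω, 0 ≤ lam b ω
  hup : ∀ b ∈ E0, ∀ (ω : Ω) (r : Rn n), V b ω r ≤ c₁ * (1 + lam b ω * (‖r‖ ^ p + 1))
  hlamint : ∀ b ∈ E0, Integrable (lam b) P

@[simp] lemma toRd_apply (z : Zd d) (i : Fin d) : toRd z i = (z i : ℝ) := rfl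

lemma toRd_add (z y : Zd d) : toRd (z + y) = toRd z + toRd y := by
  ext i; simp

lemma toRd_ne_zero {b : Zd d} (hb : b ≠ 0) : 0 < ‖toRd b‖ := by
  rw [norm_pos_iff]
  intro h
  apply hb
  ext i
  have := congrArg (fun x : Rd d => x i) h
  simpa using this

/-- Lattice points in the cube `[0,k)^d`. -/
def cubeFin (d k : ℕ) : Finset (Zd d) := Fintype.piFinset fun _ => Finset.Ico 0 (k : ℤ)

lemma mem_cubeFin {k : ℕ} {z : Zd d} : z ∈ cubeFin d k ↔ ∀ i, 0 ≤ z i ∧ z i < k := by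
  simp [cubeFin]

lemma toRd_mem_cube {k : ℕ} {z : Zd d} : toRd z ∈ cube d k ↔ z ∈ cubeFin d k := by
  rw [mem_cubeFin]
  simp only [cube, Set.mem_ofPred_eq, toRd_apply]
  refine forall_congr' fun i => ?_
  constructor
  · rintro ⟨h1, h2⟩
    exact ⟨by exact_mod_cast h1, by exact_mod_cast h2⟩
  · rintro ⟨h1, h2⟩
    exact ⟨by exact_mod_cast h1, by exact_mod_cast h2⟩

/-- Admissible correctors on the cube `[0,k)^d`. -/
abbrev Adm (n : ℕ) (E0 : Finset (Zd d)) (k : ℕ) : Type :=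
  {φ : Zd d → Rn n // ∀ z : Zd d, infDist (toRd z) (cube d k)ᶜ ≤ irange d E0 → φ z = 0}

instance (E0 : Finset (Zd d)) (k : ℕ) : Nonempty (Adm n E0 k) := ⟨⟨0, fun _ _ => rfl⟩⟩

lemma norm_le_irange {E0 : Finset (Zd d)} {b : Zd d} (hb : b ∈ E0) : ‖toRd b‖ ≤ irange d E0 := by
  unfold irange
  refine le_max_of_le_right (le_csSup ?_ ⟨b, hb, rfl⟩)
  exact (E0.finite_toSet.image _).bddAbove

lemma irange_nonneg (E0 : Finset (Zd d)) : 0 ≤ irange d E0 :=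
  le_max_of_le_left (by positivity)

lemma adm_zero {E0 : Finset (Zd d)} {k : ℕ} (φ : Adm n E0 k) {z : Zd d} (hz : z ∉ cubeFin d k) :
    φ.1 z = 0 := by
  refine φ.2 z ?_
  rw [infDist_zero_of_mem]
  · exact irange_nonneg E0
  · rw [Set.mem_compl_iff, toRd_mem_cube]; exact hz

lemma adm_nb {E0 : Finset (Zd d)} {k : ℕ} (φ : Adm n E0 k) {z b : Zd d} (hb : b ∈ E0)
    (hz : z ∉ cubeFin d k) : φ.1 (z + b) = 0 := by
  refine φ.2 _ ?_
  have hz' : toRd z ∈ (cube d k)ᶜ := by rw [Set.mem_compl_iff, toRd_mem_cube]; exact hz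
  refine (infDist_le_dist_of_mem hz').trans ?_
  rw [dist_eq_norm, toRd_add, add_sub_cancel_left]
  exact norm_le_irange hb

lemma adm_bdd {E0 : Finset (Zd d)} {k : ℕ} (φ : Adm n E0 k) : ∃ C : ℝ, ∀ z, ‖φ.1 z‖ ≤ C := by
  refine ⟨∑ z ∈ cubeFin d k, ‖φ.1 z‖, fun z => ?_⟩
  by_cases hz : z ∈ cubeFin d k
  · exact Finset.single_le_sum (f := fun z => ‖φ.1 z‖) (fun _ _ => norm_nonneg _) hz
  · rw [adm_zero φ hz, norm_zero]
    exact Finset.sum_nonneg fun _ _ => norm_nonneg _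

/-- The difference quotient of `F x + φ`. -/
def grd (F : Rd d →L[ℝ] Rn n) (φ : Zd d → Rn n) (z b : Zd d) : Rn n :=
  (‖toRd b‖)⁻¹ • ((F (toRd (z + b)) + φ (z + b)) - (F (toRd z) + φ z))

/-- Cell energy. -/
def en (τ : Zd d → Ω → Ω) (E0 : Finset (Zd d)) (V : Zd d → Ω → Rn n → ℝ) (k : ℕ)
    (F : Rd d →L[ℝ] Rn n) (φ : Zd d → Rn n) (ω : Ω) : ℝ :=
  ∑ z ∈ cubeFin d k, ∑ b ∈ E0, V b (τ z ω) (grd F φ z b)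

lemma energy1_eq (τ : Zd d → Ω → Ω) (E0 : Finset (Zd d)) (V : Zd d → Ω → Rn n → ℝ) (k : ℕ)
    (F : Rd d →L[ℝ] Rn n) (φ : Zd d → Rn n) (ω : Ω) :
    energy1 τ E0 V ω (fun z => F (toRd z) + φ z) (cube d k) = en τ E0 V k F φ ω := by
  unfold energy1 en grd
  rw [tsum_eq_sum (s := cubeFin d k)]
  · refine Finset.sum_congr rfl fun z hz => ?_
    rw [if_pos (toRd_mem_cube.2 hz)]
  · intro z hz
    rw [if_neg (fun h => hz (toRd_mem_cube.1 h))]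

/-- A dense sequence in the unit ball. -/
def Dsq (n : ℕ) (i : ℕ) : Rn n :=
  haveI : Nonempty (closedBall (0 : Rn n) 1) := ⟨⟨0, by simp⟩⟩
  (TopologicalSpace.denseSeq (closedBall (0 : Rn n) 1) i : Rn n)

lemma Dsq_norm (i : ℕ) : ‖Dsq n i‖ ≤ 1 := by
  unfold Dsq
  exact mem_closedBall_zero_iff.1 (Subtype.prop _)

/-- Local supremum of the potential. -/
def VS (V : Zd d → Ω → Rn n → ℝ) (m : ℕ) (b : Zd d) (ω : Ω) (r : Rn n) : ℝ :=
  ⨆ i : ℕ, V b ω (r + (1 / ((m : ℝ) + 1)) • Dsq n i)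

section
variable {P : Measure Ω} {τ : Zd d → Ω → Ω} {E0 : Finset (Zd d)} {p c₁ : ℝ}
    {V : Zd d → Ω → Rn n → ℝ} {lam : Zd d → Ω → ℝ}

lemma one_div_le_one' (m : ℕ) : 1 / ((m : ℝ) + 1) ≤ 1 := by
  rw [div_le_one (by positivity)]
  linarith [(Nat.cast_nonneg m : (0 : ℝ) ≤ m)]

lemma V_near_le (H : Hyp P τ E0 p c₁ V lam) {b : Zd d} (hb : b ∈ E0) (ω : Ω) (r s : Rn n)
    (hs : ‖s‖ ≤ 1) : V b ω (r + s) ≤ c₁ * (1 + lam b ω * ((‖r‖ + 1) ^ p + 1)) := by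
  refine (H.hup b hb ω _).trans ?_
  have h1 : ‖r + s‖ ≤ ‖r‖ + 1 := (norm_add_le _ _).trans (by linarith)
  have := H.hc₁
  have := H.hlamnn b hb ω
  have := H.hp
  gcongr

lemma Dsq_smul_norm (m i : ℕ) : ‖(1 / ((m : ℝ) + 1)) • Dsq n i‖ ≤ 1 / ((m : ℝ) + 1) := by
  rw [norm_smul, Real.norm_of_nonneg (by positivity)]
  exact mul_le_of_le_one_right (by positivity) (Dsq_norm i)

lemma VS_bdd (H : Hyp P τ E0 p c₁ V lam) {b : Zd d} (hb : b ∈ E0) (m : ℕ) (ω : Ω) (r : Rn n) :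
    BddAbove (range fun i : ℕ => V b ω (r + (1 / ((m : ℝ) + 1)) • Dsq n i)) := by
  refine ⟨c₁ * (1 + lam b ω * ((‖r‖ + 1) ^ p + 1)), ?_⟩
  rintro _ ⟨i, rfl⟩
  exact V_near_le H hb ω r _ ((Dsq_smul_norm m i).trans (one_div_le_one' m))

lemma VS_le (H : Hyp P τ E0 p c₁ V lam) {b : Zd d} (hb : b ∈ E0) (m : ℕ) (ω : Ω) (r : Rn n) :
    VS V m b ω r ≤ c₁ * (1 + lam b ω * ((‖r‖ + 1) ^ p + 1)) :=
  ciSup_le fun i => V_near_le H hb ω r _ ((Dsq_smul_norm m i).trans (one_div_le_one' m))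

lemma le_VS (H : Hyp P τ E0 p c₁ V lam) {b : Zd d} (hb : b ∈ E0) (m : ℕ) (ω : Ω) (r s : Rn n)
    (hs : ‖s‖ ≤ 1 / ((m : ℝ) + 1)) : V b ω (r + s) ≤ VS V m b ω r := by
  have hpos : (0 : ℝ) < (m : ℝ) + 1 := by positivity
  haveI : Nonempty (closedBall (0 : Rn n) 1) := ⟨⟨0, by simp⟩⟩
  have key : ∀ x : closedBall (0 : Rn n) 1,
      V b ω (r + (1 / ((m : ℝ) + 1)) • (x : Rn n)) ≤ VS V m b ω r := by
    intro x
    refine (TopologicalSpace.denseRange_denseSeq (closedBall (0 : Rn n) 1)).induction_on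
      (p := fun x : closedBall (0 : Rn n) 1 =>
        V b ω (r + (1 / ((m : ℝ) + 1)) • (x : Rn n)) ≤ VS V m b ω r) x ?_ ?_
    · have h1 : Continuous fun x : closedBall (0 : Rn n) 1 =>
          V b ω (r + (1 / ((m : ℝ) + 1)) • (x : Rn n)) :=
        (H.hVcont b hb ω).comp (by fun_prop)
      exact isClosed_le h1 continuous_const
    · intro i
      exact le_ciSup (VS_bdd H hb m ω r) i
  have hx : ((m : ℝ) + 1) • s ∈ closedBall (0 : Rn n) 1 := by
    rw [mem_closedBall_zero_iff, norm_smul, Real.norm_of_nonneg hpos.le]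
    rw [le_div_iff₀ hpos] at hs
    linarith
  have := key ⟨_, hx⟩
  simpa only [smul_smul, one_div, inv_mul_cancel₀ hpos.ne', one_smul] using this

lemma VS_ge (H : Hyp P τ E0 p c₁ V lam) {b : Zd d} (hb : b ∈ E0) (m : ℕ) (ω : Ω) (r : Rn n) :
    V b ω r ≤ VS V m b ω r := by
  simpa using le_VS H hb m ω r 0 (by simp only [norm_zero]; positivity)

lemma VS_nonneg (H : Hyp P τ E0 p c₁ V lam) {b : Zd d} (hb : b ∈ E0) (m : ℕ) (ω : Ω) (r : Rn n) :
    0 ≤ VS V m b ω r := (H.hVnn b hb ω r).trans (VS_ge H hb m ω r)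

lemma VS_tendsto (H : Hyp P τ E0 p c₁ V lam) {b : Zd d} (hb : b ∈ E0) (ω : Ω) (r : Rn n) :
    Tendsto (fun m : ℕ => VS V m b ω r) atTop (𝓝 (V b ω r)) := by
  rw [Metric.tendsto_atTop]
  intro η hη
  obtain ⟨δ, hδ, h⟩ := Metric.continuous_iff.1 (H.hVcont b hb ω) r (η / 2) (by positivity)
  obtain ⟨N, hN⟩ := exists_nat_one_div_lt hδ
  refine ⟨N, fun m hm => ?_⟩
  have h1 : VS V m b ω r ≤ V b ω r + η / 2 := by
    refine ciSup_le fun i => ?_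
    have h2 : dist (r + (1 / ((m : ℝ) + 1)) • Dsq n i) r < δ := by
      rw [dist_eq_norm, add_sub_cancel_left]
      refine (Dsq_smul_norm m i).trans_lt (lt_of_le_of_lt ?_ hN)
      have : (N : ℝ) ≤ m := by exact_mod_cast hm
      gcongr
    have := h _ h2
    rw [Real.dist_eq, abs_lt] at this
    linarith [this.2]
  have h2 := VS_ge H hb m ω r
  rw [Real.dist_eq, abs_lt]
  constructor <;> linarith

lemma VS_mono (H : Hyp P τ E0 p c₁ V lam) {b : Zd d} (hb : b ∈ E0) (m : ℕ) (ω : Ω) (r r' : Rn n)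
    (h : ‖r - r'‖ ≤ 1 / (((2 * m + 1 : ℕ) : ℝ) + 1)) :
    VS V (2 * m + 1) b ω r ≤ VS V m b ω r' := by
  refine ciSup_le fun i => ?_
  have e : r + (1 / (((2 * m + 1 : ℕ) : ℝ) + 1)) • Dsq n i =
      r' + ((r - r') + (1 / (((2 * m + 1 : ℕ) : ℝ) + 1)) • Dsq n i) := by abel
  rw [e]
  refine le_VS H hb m ω r' _ ((norm_add_le _ _).trans ?_)
  refine (add_le_add h (Dsq_smul_norm _ i)).trans (le_of_eq ?_)
  push_cast
  field_simp
  ring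

lemma V_meas (H : Hyp P τ E0 p c₁ V lam) {b : Zd d} (hb : b ∈ E0) (r : Rn n) :
    Measurable fun ω => V b ω r :=
  (H.hVmeas b hb).comp (measurable_id.prodMk measurable_const)

lemma VS_meas (H : Hyp P τ E0 p c₁ V lam) {b : Zd d} (hb : b ∈ E0) (m : ℕ) (r : Rn n) :
    Measurable fun ω => VS V m b ω r :=
  Measurable.iSup fun _ => V_meas H hb _

/-- Relaxed cell energy. -/
def enS (τ : Zd d → Ω → Ω) (E0 : Finset (Zd d)) (V : Zd d → Ω → Rn n → ℝ) (k m : ℕ)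
    (F : Rd d →L[ℝ] Rn n) (φ : Zd d → Rn n) (ω : Ω) : ℝ :=
  ∑ z ∈ cubeFin d k, ∑ b ∈ E0, VS V m b (τ z ω) (grd F φ z b)

instance (E0 : Finset (Zd d)) (k : ℕ) : TopologicalSpace.SeparableSpace (Adm n E0 k) := by
  have h1 : SecondCountableTopology (Rn n) := inferInstance
  have h2 : SecondCountableTopology (Zd d → Rn n) := inferInstance
  have h3 : SecondCountableTopology (Adm n E0 k) :=
    TopologicalSpace.Subtype.secondCountableTopology _
  infer_instance

/-- A dense sequence of correctors. -/
def phiS (n : ℕ) (E0 : Finset (Zd d)) (k j : ℕ) : Adm n E0 k :=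
  TopologicalSpace.denseSeq (Adm n E0 k) j

/-- Minimum of the relaxed cell energy over finitely many correctors. -/
def gS (τ : Zd d → Ω → Ω) (E0 : Finset (Zd d)) (V : Zd d → Ω → Rn n → ℝ) (k J m : ℕ)
    (F : Rd d →L[ℝ] Rn n) (ω : Ω) : ℝ :=
  ⨅ j : Fin (J + 1), enS τ E0 V k m F (phiS n E0 k j).1 ω

lemma en_nonneg (H : Hyp P τ E0 p c₁ V lam) (k : ℕ) (F : Rd d →L[ℝ] Rn n) (φ : Zd d → Rn n)
    (ω : Ω) : 0 ≤ en τ E0 V k F φ ω :=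
  Finset.sum_nonneg fun _ _ => Finset.sum_nonneg fun b hb => H.hVnn b hb _ _

lemma en_bdd (H : Hyp P τ E0 p c₁ V lam) (k : ℕ) (F : Rd d →L[ℝ] Rn n) (ω : Ω) {ι : Type*}
    (φ : ι → Zd d → Rn n) : BddBelow (range fun i => en τ E0 V k F (φ i) ω) :=
  ⟨0, by rintro _ ⟨i, rfl⟩; exact en_nonneg H k F _ ω⟩

lemma mF_eq (H : Hyp P τ E0 p c₁ V lam) (k : ℕ) (F : Rd d →L[ℝ] Rn n) (ω : Ω) :
    mF τ E0 V ω F (cube d k) = ⨅ j : ℕ, en τ E0 V k F (phiS n E0 k j).1 ω := by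
  unfold mF
  simp only [energy1_eq]
  refine le_antisymm ?_ ?_
  · exact le_ciInf fun j => ciInf_le
      (en_bdd H k F ω (fun φ : Adm n E0 k => φ.1)) (phiS n E0 k j)
  · refine le_ciInf fun φ => ?_
    refine (TopologicalSpace.denseRange_denseSeq (Adm n E0 k)).induction_on
      (p := fun φ : Adm n E0 k => ⨅ j : ℕ, en τ E0 V k F (phiS n E0 k j).1 ω ≤
        en τ E0 V k F φ.1 ω) φ ?_ ?_
    · refine isClosed_le continuous_const ?_
      unfold en
      refine continuous_finsetSum _ fun z _ => continuous_finsetSum _ fun b hb => ?_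
      refine (H.hVcont b hb _).comp ?_
      unfold grd
      have : ∀ z, Continuous fun φ : Adm n E0 k => φ.1 z := fun z =>
        (continuous_apply z).comp continuous_subtype_val
      exact ((continuous_const.add (this _)).sub
        (continuous_const.add (this _))).const_smul (‖toRd b‖)⁻¹
    · intro j
      exact ciInf_le (en_bdd H k F ω (fun j => (phiS n E0 k j).1)) j

lemma en_le_enS (H : Hyp P τ E0 p c₁ V lam) (k m : ℕ) (F : Rd d →L[ℝ] Rn n) (φ : Zd d → Rn n)
    (ω : Ω) : en τ E0 V k F φ ω ≤ enS τ E0 V k m F φ ω :=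
  Finset.sum_le_sum fun _ _ => Finset.sum_le_sum fun _ hb => VS_ge H hb _ _ _

lemma enS_nonneg (H : Hyp P τ E0 p c₁ V lam) (k m : ℕ) (F : Rd d →L[ℝ] Rn n) (φ : Zd d → Rn n)
    (ω : Ω) : 0 ≤ enS τ E0 V k m F φ ω := (en_nonneg H k F φ ω).trans (en_le_enS H k m F φ ω)

lemma enS_tendsto (H : Hyp P τ E0 p c₁ V lam) (k : ℕ) (F : Rd d →L[ℝ] Rn n) (φ : Zd d → Rn n)
    (ω : Ω) : Tendsto (fun m => enS τ E0 V k m F φ ω) atTop (𝓝 (en τ E0 V k F φ ω)) :=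
  tendsto_finsetSum _ fun _ _ => tendsto_finsetSum _ fun _ hb => VS_tendsto H hb _ _

lemma gS_le (k J m j : ℕ) (hj : j ≤ J)
    (F : Rd d →L[ℝ] Rn n) (ω : Ω) :
    gS τ E0 V k J m F ω ≤ enS τ E0 V k m F (phiS n E0 k j).1 ω :=
  ciInf_le (f := fun j : Fin (J + 1) => enS τ E0 V k m F (phiS n E0 k j).1 ω)
    (Set.finite_range _).bddBelow ⟨j, by omega⟩

lemma gS_nonneg (H : Hyp P τ E0 p c₁ V lam) (k J m : ℕ) (F : Rd d →L[ℝ] Rn n) (ω : Ω) :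
    0 ≤ gS τ E0 V k J m F ω := le_ciInf fun _ => enS_nonneg H _ _ _ _ _

lemma mF_le_gS (H : Hyp P τ E0 p c₁ V lam) (k J m : ℕ) (F : Rd d →L[ℝ] Rn n) (ω : Ω) :
    mF τ E0 V ω F (cube d k) ≤ gS τ E0 V k J m F ω := by
  rw [mF_eq H]
  exact le_ciInf fun j => (ciInf_le (en_bdd H k F ω (fun j => (phiS n E0 k j).1)) j).trans
    (en_le_enS H _ _ _ _ _)

lemma gS_tendsto (H : Hyp P τ E0 p c₁ V lam) (k : ℕ) (F : Rd d →L[ℝ] Rn n) (ω : Ω) :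
    Tendsto (fun m => gS τ E0 V k m m F ω) atTop (𝓝 (mF τ E0 V ω F (cube d k))) := by
  rw [Metric.tendsto_atTop]
  intro η hη
  have h0 : ⨅ j : ℕ, en τ E0 V k F (phiS n E0 k j).1 ω < mF τ E0 V ω F (cube d k) + η / 2 := by
    rw [← mF_eq H]; linarith
  obtain ⟨j, hj⟩ := exists_lt_of_ciInf_lt h0
  obtain ⟨N, hN⟩ := Metric.tendsto_atTop.1 (enS_tendsto H k F (phiS n E0 k j).1 ω) (η / 2)
    (by positivity)
  refine ⟨max N j, fun m hm => ?_⟩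
  have h1 := hN m ((le_max_left _ _).trans hm)
  have h2 := gS_le (τ := τ) (V := V) (E0 := E0) k m m j ((le_max_right _ _).trans hm) F ω
  have h3 := mF_le_gS H k m m F ω
  rw [Real.dist_eq, abs_lt] at h1 ⊢
  constructor <;> linarith [h1.2]

lemma enS_meas (H : Hyp P τ E0 p c₁ V lam) (k m : ℕ) (F : Rd d →L[ℝ] Rn n) (φ : Zd d → Rn n) :
    Measurable (enS τ E0 V k m F φ) :=
  Finset.measurable_sum _ fun z _ => Finset.measurable_sum _ fun _ hb =>
    (VS_meas H hb m _).comp (H.hτmp z).measurable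

lemma gS_meas (H : Hyp P τ E0 p c₁ V lam) (k J m : ℕ) (F : Rd d →L[ℝ] Rn n) :
    Measurable (gS τ E0 V k J m F) := Measurable.iInf fun _ => enS_meas H _ _ _ _

/-- An integrable bound for the relaxed cell energies. -/
def bnd (τ : Zd d → Ω → Ω) (E0 : Finset (Zd d)) (p c₁ : ℝ) (lam : Zd d → Ω → ℝ) (k : ℕ)
    (F : Rd d →L[ℝ] Rn n) (φ : Zd d → Rn n) (ω : Ω) : ℝ :=
  ∑ z ∈ cubeFin d k, ∑ b ∈ E0, c₁ * (1 + lam b (τ z ω) * ((‖grd F φ z b‖ + 1) ^ p + 1))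

lemma enS_le_bnd (H : Hyp P τ E0 p c₁ V lam) (k m : ℕ) (F : Rd d →L[ℝ] Rn n) (φ : Zd d → Rn n)
    (ω : Ω) : enS τ E0 V k m F φ ω ≤ bnd τ E0 p c₁ lam k F φ ω :=
  Finset.sum_le_sum fun _ _ => Finset.sum_le_sum fun _ hb => VS_le H hb _ _ _

lemma bnd_int [IsProbabilityMeasure P] (H : Hyp P τ E0 p c₁ V lam) (k : ℕ) (F : Rd d →L[ℝ] Rn n) (φ : Zd d → Rn n) :
    Integrable (bnd τ E0 p c₁ lam k F φ) P := by
  refine integrable_finsetSum _ fun z _ => integrable_finsetSum _ fun b hb => ?_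
  refine Integrable.const_mul ((integrable_const _).add (Integrable.mul_const ?_ _)) _
  exact (H.hτmp z).integrable_comp_of_integrable (H.hlamint b hb)

lemma gS_int [IsProbabilityMeasure P] (H : Hyp P τ E0 p c₁ V lam) (k J m : ℕ) (F : Rd d →L[ℝ] Rn n) :
    Integrable (gS τ E0 V k J m F) P := by
  refine (bnd_int H k F (phiS n E0 k 0).1).mono' (gS_meas H k J m F).aestronglyMeasurable ?_
  refine Eventually.of_forall fun ω => ?_
  rw [Real.norm_of_nonneg (gS_nonneg H _ _ _ _ _)]
  exact (gS_le k J m 0 (Nat.zero_le _) F ω).trans (enS_le_bnd H _ _ _ _ _)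

lemma gS_int_tendsto [IsProbabilityMeasure P] (H : Hyp P τ E0 p c₁ V lam) (k : ℕ) (F : Rd d →L[ℝ] Rn n) :
    Tendsto (fun m => ∫ ω, gS τ E0 V k m m F ω ∂P) atTop
      (𝓝 (∫ ω, mF τ E0 V ω F (cube d k) ∂P)) := by
  refine tendsto_integral_of_dominated_convergence (bnd τ E0 p c₁ lam k F (phiS n E0 k 0).1)
    (fun m => (gS_meas H k m m F).aestronglyMeasurable) (bnd_int H k F _) ?_ ?_
  · intro m
    refine Eventually.of_forall fun ω => ?_
    rw [Real.norm_of_nonneg (gS_nonneg H _ _ _ _ _)]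
    exact (gS_le k m m 0 (Nat.zero_le _) F ω).trans (enS_le_bnd H _ _ _ _ _)
  · exact Eventually.of_forall fun ω => gS_tendsto H k F ω

lemma grd_sub (F F' : Rd d →L[ℝ] Rn n) (φ : Zd d → Rn n) (z b : Zd d) :
    ‖grd F φ z b - grd F' φ z b‖ ≤ ‖F - F'‖ := by
  have e : grd F φ z b - grd F' φ z b = (‖toRd b‖)⁻¹ • ((F - F') (toRd b)) := by
    unfold grd
    rw [← smul_sub]
    congr 1
    simp only [toRd_add, map_add, ContinuousLinearMap.sub_apply]
    abel
  rw [e, norm_smul, norm_inv, norm_norm]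
  by_cases hb : ‖toRd b‖ = 0
  · rw [hb]; simp
  · rw [inv_mul_le_iff₀ (lt_of_le_of_ne (norm_nonneg _) (Ne.symm hb)), mul_comm]
    exact (F - F').le_opNorm _

/-- Approximation of `W₀(F)` from above by countably many data. -/
lemma exists_theta [IsProbabilityMeasure P] (H : Hyp P τ E0 p c₁ V lam) (F0 : Rd d →L[ℝ] Rn n) (c : ℝ)
    (hc : W0 P τ E0 V F0 < c) (Fs : ℕ → (Rd d →L[ℝ] Rn n)) (hFs : DenseRange Fs) :
    ∃ k J m i : ℕ, 0 < k ∧ ‖F0 - Fs i‖ < 1 / ((m : ℝ) + 1) ∧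
      (((k : ℕ) : ℝ) ^ d)⁻¹ * ∫ ω, gS τ E0 V k J m (Fs i) ω ∂P < c := by
  unfold W0 at hc
  have : Nonempty {k : ℕ // 0 < k} := ⟨⟨1, one_pos⟩⟩
  obtain ⟨⟨k, hk⟩, hkc⟩ := exists_lt_of_ciInf_lt hc
  have ht := ((gS_int_tendsto H k F0).const_mul (((k : ℕ) : ℝ) ^ d)⁻¹).eventually_lt_const hkc
  obtain ⟨m, hm⟩ := ht.exists
  obtain ⟨i, hi⟩ := hFs.exists_dist_lt F0 (show (0 : ℝ) < 1 / (((2 * m + 1 : ℕ) : ℝ) + 1) by positivity)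
  rw [dist_eq_norm] at hi
  refine ⟨k, m, 2 * m + 1, i, hk, hi, lt_of_le_of_lt ?_ hm⟩
  refine mul_le_mul_of_nonneg_left ?_ (by positivity)
  refine integral_mono (gS_int H _ _ _ _) (gS_int H _ _ _ _) fun ω => ?_
  refine ciInf_mono (Set.finite_range _).bddBelow fun j => ?_
  refine Finset.sum_le_sum fun z _ => Finset.sum_le_sum fun b hb => VS_mono H hb m _ _ _ ?_
  refine (grd_sub _ _ _ _ _).trans ?_
  rw [norm_sub_rev]
  exact hi.le

lemma mF_nonneg (H : Hyp P τ E0 p c₁ V lam) (k : ℕ) (F : Rd d →L[ℝ] Rn n) (ω : Ω) :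
    0 ≤ mF τ E0 V ω F (cube d k) := by
  rw [mF_eq H]; exact le_ciInf fun _ => en_nonneg H _ _ _ _

lemma W0_nonneg (H : Hyp P τ E0 p c₁ V lam) (F : Rd d →L[ℝ] Rn n) : 0 ≤ W0 P τ E0 V F := by
  have : Nonempty {k : ℕ // 0 < k} := ⟨⟨1, one_pos⟩⟩
  exact le_ciInf fun k => mul_nonneg (by positivity) (integral_nonneg fun ω => mF_nonneg H _ _ _)

lemma W0_le [IsProbabilityMeasure P] (H : Hyp P τ E0 p c₁ V lam) (M : ℝ) :
    ∃ C : ℝ, ∀ F : Rd d →L[ℝ] Rn n, ‖F‖ ≤ M → W0 P τ E0 V F ≤ C := by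
  refine ⟨∑ z ∈ cubeFin d 1, ∑ b ∈ E0, ∫ ω, c₁ * (1 + lam b (τ z ω) * (M ^ p + 1)) ∂P,
    fun F hF => ?_⟩
  have hb : BddBelow (range fun k : {k : ℕ // 0 < k} =>
      (((k : ℕ) : ℝ) ^ d)⁻¹ * ∫ ω, mF τ E0 V ω F (cube d k) ∂P) :=
    ⟨0, by rintro _ ⟨k, rfl⟩; exact mul_nonneg (by positivity)
            (integral_nonneg fun ω => mF_nonneg H _ _ _)⟩
  refine (ciInf_le hb ⟨1, one_pos⟩).trans ?_
  simp only [Nat.cast_one, one_pow, inv_one, one_mul]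
  have hIntg : ∀ z ∈ cubeFin d 1, ∀ b ∈ E0,
      Integrable (fun ω => c₁ * (1 + lam b (τ z ω) * (M ^ p + 1))) P := fun z _ b hb =>
    Integrable.const_mul ((integrable_const _).add (Integrable.mul_const
      ((H.hτmp z).integrable_comp_of_integrable (H.hlamint b hb)) _)) _
  have e : ∑ z ∈ cubeFin d 1, ∑ b ∈ E0, ∫ ω, c₁ * (1 + lam b (τ z ω) * (M ^ p + 1)) ∂P =
      ∫ ω, ∑ z ∈ cubeFin d 1, ∑ b ∈ E0, c₁ * (1 + lam b (τ z ω) * (M ^ p + 1)) ∂P := by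
    rw [integral_finsetSum _ fun z hz => integrable_finsetSum _ fun b hb => hIntg z hz b hb]
    refine Finset.sum_congr rfl fun z hz => ?_
    rw [integral_finsetSum _ fun b hb => hIntg z hz b hb]
  rw [e]
  refine integral_mono_of_nonneg (Eventually.of_forall fun ω => mF_nonneg H _ _ _)
    (integrable_finsetSum _ fun z hz => integrable_finsetSum _ fun b hb => hIntg z hz b hb)
    (Eventually.of_forall fun ω => ?_)
  have h0 : mF τ E0 V ω F (cube d 1) ≤ en τ E0 V 1 F 0 ω := by
    unfold mF
    simp only [energy1_eq]
    exact ciInf_le (en_bdd H 1 F ω (fun φ : Adm n E0 1 => φ.1)) ⟨0, fun _ _ => rfl⟩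
  refine h0.trans (Finset.sum_le_sum fun z _ => Finset.sum_le_sum fun b hb => ?_)
  refine (H.hup b hb _ _).trans ?_
  have hg : ‖grd F 0 z b‖ ≤ M := by
    have := grd_sub F 0 0 z b
    have e0 : grd (0 : Rd d →L[ℝ] Rn n) 0 z b = 0 := by simp [grd]
    rw [e0, sub_zero, sub_zero] at this
    exact this.trans hF
  have := H.hc₁
  have := H.hlamnn b hb (τ z ω)
  have := H.hp
  gcongr

lemma W0_meas [IsProbabilityMeasure P] (H : Hyp P τ E0 p c₁ V lam) :
    Measurable fun F : Rd d →L[ℝ] Rn n => W0 P τ E0 V F := by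
  unfold W0
  refine Measurable.iInf fun k => Measurable.const_mul ?_ _
  have hm : Measurable fun q : (Rd d →L[ℝ] Rn n) × Ω => mF τ E0 V q.2 q.1 (cube d k) := by
    simp only [mF_eq H]
    refine Measurable.iInf fun j => Finset.measurable_sum _ fun z _ =>
      Finset.measurable_sum _ fun b hb => ?_
    refine (H.hVmeas b hb).comp (Measurable.prodMk ((H.hτmp z).measurable.comp measurable_snd) ?_)
    have hF : ∀ x : Rd d, Measurable fun q : (Rd d →L[ℝ] Rn n) × Ω => q.1 x := fun x =>
      (ContinuousLinearMap.measurable_apply x).comp measurable_fst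
    exact (((hF _).add_const _).sub ((hF _).add_const _)).const_smul (‖toRd b‖)⁻¹
  exact (hm.stronglyMeasurable.integral_prod_right' (ν := P)).measurable
end

/-! ### The tiling construction -/

/-- Local energy at a lattice site. -/
def loc (τ : Zd d → Ω → Ω) (E0 : Finset (Zd d)) (V : Zd d → Ω → Rn n → ℝ)
    (ε : ℝ) (ω : Ω) (v : Zd d → Rn n) (z : Zd d) : ℝ :=
  ∑ b ∈ E0, V b (τ z ω) ((ε * ‖toRd b‖)⁻¹ • (v (z + b) - v z))

/-- Corner of the tile that contains `z`. -/
def crn (k : ℕ) (s z : Zd d) : Zd d := fun i => z i - (z i - s i) % k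

lemma sub_crn_mem {k : ℕ} (hk : 0 < k) (s z : Zd d) : z - crn k s z ∈ cubeFin d k := by
  rw [mem_cubeFin]
  intro i
  have h : (0 : ℤ) < k := by exact_mod_cast hk
  simp only [crn, Pi.sub_apply, sub_sub_cancel]
  exact ⟨Int.emod_nonneg _ h.ne', Int.emod_lt_of_pos _ h⟩

lemma crn_eq_of_mem {k : ℕ} {s z z' : Zd d} (h : z' - crn k s z ∈ cubeFin d k) :
    crn k s z' = crn k s z := by
  rw [mem_cubeFin] at h
  ext i
  have hi := h i
  simp only [crn, Pi.sub_apply] at hi ⊢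
  have e : (z' i - s i) % (k : ℤ) = z' i - (z i - (z i - s i) % k) := by
    have h1 : z' i - s i = (z' i - (z i - (z i - s i) % k)) + k * ((z i - s i) / k) := by
      have := Int.mul_ediv_add_emod (z i - s i) k
      linarith
    rw [h1, Int.add_mul_emod_self_left, Int.emod_eq_of_lt hi.1 hi.2]
  rw [e]
  ring

lemma card_cubeFin (k : ℕ) : (cubeFin d k).card = k ^ d := by
  simp [cubeFin]

section
variable {P : Measure Ω} {τ : Zd d → Ω → Ω} {E0 : Finset (Zd d)} {p c₁ : ℝ}
    {V : Zd d → Ω → Rn n → ℝ} {lam : Zd d → Ω → ℝ}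

lemma loc_nonneg (H : Hyp P τ E0 p c₁ V lam) (ε : ℝ) (ω : Ω) (v : Zd d → Rn n) (z : Zd d) :
    0 ≤ loc τ E0 V ε ω v z := Finset.sum_nonneg fun b hb => H.hVnn b hb _ _

lemma exists_offset {k : ℕ} (hk : 0 < k) (B : Finset (Zd d)) (g : Zd d → ℝ) :
    ∃ s ∈ cubeFin d k, ∑ c ∈ B.filter (fun c => (fun i => c i % (k : ℤ)) = s), g c ≤
      ((k : ℝ) ^ d)⁻¹ * ∑ c ∈ B, g c := by
  have h : (0 : ℤ) < k := by exact_mod_cast hk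
  have hmap : ∀ c ∈ B, (fun i => c i % (k : ℤ)) ∈ cubeFin d k := by
    intro c _
    rw [mem_cubeFin]
    exact fun i => ⟨Int.emod_nonneg _ h.ne', Int.emod_lt_of_pos _ h⟩
  have hs := Finset.sum_fiberwise_of_maps_to hmap g
  have hne : (cubeFin d k).Nonempty := ⟨0, by rw [mem_cubeFin]; intro i; simp [hk]⟩
  have hkd : ((k : ℝ) ^ d) ≠ 0 := by positivity
  obtain ⟨s, hsm, hs'⟩ := Finset.exists_le_of_sum_le hne
    (f := fun s => ∑ c ∈ B.filter (fun c => (fun i => c i % (k : ℤ)) = s), g c)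
    (g := fun _ => ((k : ℝ) ^ d)⁻¹ * ∑ c ∈ B, g c) (by
      rw [hs, Finset.sum_const, card_cubeFin, nsmul_eq_mul]
      push_cast
      rw [← mul_assoc, mul_inv_cancel₀ hkd, one_mul])
  exact ⟨s, hsm, hs'⟩

/-- Bound for the energy density of almost affine functions. -/
def Lam (E0 : Finset (Zd d)) (c₁ : ℝ) (lam : Zd d → Ω → ℝ) (M : ℝ) (ω : Ω) : ℝ :=
  ∑ b ∈ E0, c₁ * (1 + lam b ω * M)

lemma tile_lemma (H : Hyp P τ E0 p c₁ V lam) {k : ℕ} (hk : 0 < k) (J m : ℕ)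
    (F : Rd d →L[ℝ] Rn n) (ω : Ω) (C : ℝ) (hC : ∀ j : Fin (J + 1), ∀ z, ‖(phiS n E0 k j).1 z‖ ≤ C)
    (B : Finset (Zd d)) {ε : ℝ} (hε : 0 < ε) (U : Zd d → Rn n)
    (hU : ∀ z ∈ B, ∀ b ∈ E0,
      ‖U (z + b) - U z - ε • F (toRd b)‖ ≤ 1 / ((m : ℝ) + 1) * (ε * ‖toRd b‖)) :
    ∃ w : Zd d → Rn n, (∀ z, ‖w z‖ ≤ C * ε) ∧ (∀ z, z ∉ B → w z = 0) ∧
      (∀ z, z ∉ B → ∀ b ∈ E0, w (z + b) = 0) ∧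
      ∑ z ∈ B, loc τ E0 V ε ω (fun z => U z + w z) z ≤
        ((k : ℝ) ^ d)⁻¹ * ∑ z ∈ B, gS τ E0 V k J m F (τ z ω) +
        ∑ z ∈ B.filter (fun z => ¬ ∀ y : Zd d, (∀ i, |y i| ≤ (k : ℤ)) → z + y ∈ B),
          Lam E0 c₁ lam ((‖F‖ + 1) ^ p + 1) (τ z ω) := by
  obtain ⟨s, hsm, hs⟩ := exists_offset hk B fun c => gS τ E0 V k J m F (τ c ω)
  have hC0 : 0 ≤ C := (norm_nonneg _).trans (hC 0 0)
  have hj : ∀ c : Zd d, ∃ j : Fin (J + 1), enS τ E0 V k m F (phiS n E0 k j).1 (τ c ω) =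
      gS τ E0 V k J m F (τ c ω) := fun c => exists_eq_ciInf_of_finite
  choose j hj using hj
  set G : Zd d → Prop := fun c => ∀ y ∈ cubeFin d k, c + y ∈ B with hG
  set w : Zd d → Rn n := fun z => if G (crn k s z) then
    ε • (phiS n E0 k (j (crn k s z))).1 (z - crn k s z) else 0 with hw
  have hwb : ∀ z, ∀ b ∈ E0, w (z + b) = if G (crn k s z) then
      ε • (phiS n E0 k (j (crn k s z))).1 (z - crn k s z + b) else 0 := by
    intro z b hb
    by_cases hc : crn k s (z + b) = crn k s z
    · simp only [hw, hc]
      rw [show z + b - crn k s z = z - crn k s z + b by abel]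
    · have h1 : z + b - crn k s z ∉ cubeFin d k := fun h => hc (crn_eq_of_mem h)
      have h2 : z - crn k s (z + b) ∉ cubeFin d k := fun h => hc (crn_eq_of_mem h).symm
      have h3 := adm_nb (phiS n E0 k (j (crn k s (z + b)))) hb h2
      rw [show z - crn k s (z + b) + b = z + b - crn k s (z + b) by abel] at h3
      have h4 := adm_zero (phiS n E0 k (j (crn k s z))) h1
      rw [show z + b - crn k s z = z - crn k s z + b by abel] at h4
      simp only [hw, h3, h4, smul_zero, ite_self]
  have hGB : ∀ z, G (crn k s z) → z ∈ B := by
    intro z h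
    have := h _ (sub_crn_mem hk s z)
    rwa [add_sub_cancel] at this
  refine ⟨w, ?_, ?_, ?_, ?_⟩
  · intro z
    simp only [hw]
    split_ifs
    · rw [norm_smul, Real.norm_of_nonneg hε.le, mul_comm]
      exact mul_le_mul_of_nonneg_right (hC _ _) hε.le
    · rw [norm_zero]; positivity
  · intro z hz
    simp only [hw]
    rw [if_neg (fun h => hz (hGB z h))]
  · intro z hz b hb
    rw [hwb z b hb, if_neg (fun h => hz (hGB z h))]
  rw [← Finset.sum_filter_add_sum_filter_not B (fun z => G (crn k s z))]
  have hm1 : 1 / ((m : ℝ) + 1) ≤ 1 := one_div_le_one' m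
  -- rewriting the gradient
  have hgr : ∀ z ∈ B, ∀ b ∈ E0, ∃ r : Rn n, ‖r‖ ≤ 1 / ((m : ℝ) + 1) ∧
      ∀ φ φ' : Rn n, (ε * ‖toRd b‖)⁻¹ • (U (z + b) + ε • φ' - (U z + ε • φ)) =
        (‖toRd b‖)⁻¹ • (F (toRd b) + φ' - φ) + r := by
    intro z hz b hb
    have hb0 : 0 < ‖toRd b‖ := toRd_ne_zero (fun h => H.hE00 (h ▸ hb))
    refine ⟨(ε * ‖toRd b‖)⁻¹ • (U (z + b) - U z - ε • F (toRd b)), ?_, ?_⟩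
    · rw [norm_smul, norm_inv, Real.norm_of_nonneg (by positivity), inv_mul_le_iff₀ (by positivity),
        mul_comm]
      exact hU z hz b hb
    · intro φ φ'
      have e : (‖toRd b‖)⁻¹ • (F (toRd b) + φ' - φ) =
          (ε * ‖toRd b‖)⁻¹ • (ε • (F (toRd b) + φ' - φ)) := by
        rw [smul_smul]; congr 1; field_simp
      rw [e, ← smul_add]
      congr 1
      simp only [smul_add, smul_sub]
      abel
  refine add_le_add ?_ ?_
  · refine le_trans ?_ hs
    have hmap : ∀ z ∈ B.filter (fun z => G (crn k s z)), crn k s z ∈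
        B.filter (fun c => (fun i => c i % (k : ℤ)) = s) := by
      intro z hz
      rw [Finset.mem_filter] at hz ⊢
      refine ⟨?_, ?_⟩
      · have := hz.2 0 (by rw [mem_cubeFin]; intro i; simp [hk])
        rwa [add_zero] at this
      · ext i
        simp only [crn]
        have h1 := Int.mul_ediv_add_emod (z i - s i) k
        rw [show z i - (z i - s i) % (k : ℤ) = s i + k * ((z i - s i) / k) by linarith,
          Int.add_mul_emod_self_left]
        have h2 := (mem_cubeFin.1 hsm) i
        exact Int.emod_eq_of_lt h2.1 h2.2
    rw [← Finset.sum_fiberwise_of_maps_to hmap]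
    refine Finset.sum_le_sum fun c hc => ?_
    rw [← hj c]
    unfold enS
    set Hf : Zd d → ℝ := fun y => ∑ b ∈ E0,
      VS V m b (τ y (τ c ω)) (grd F (phiS n E0 k (j c)).1 y b) with hHf
    have hHnn : ∀ y, 0 ≤ Hf y := fun y => Finset.sum_nonneg fun b hb => VS_nonneg H hb _ _ _
    calc _ ≤ ∑ z ∈ (B.filter (fun z => G (crn k s z))).filter (fun z => crn k s z = c),
          Hf (z - c) := by
          refine Finset.sum_le_sum fun z hz => Finset.sum_le_sum fun b hb => ?_
          rw [Finset.mem_filter, Finset.mem_filter] at hz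
          obtain ⟨⟨hzB, hzG⟩, hzc⟩ := hz
          obtain ⟨r, hr, hr'⟩ := hgr z hzB b hb
          beta_reduce
          rw [hwb z b hb, if_pos hzG]
          simp only [hw]
          rw [if_pos hzG, hr', hzc]
          have hτ : τ z ω = τ (z - c) (τ c ω) := by
            rw [← Function.comp_apply (f := τ (z - c)), ← H.hτadd, sub_add_cancel]
          have hgrd : (‖toRd b‖)⁻¹ • (F (toRd b) + (phiS n E0 k (j c)).1 (z - c + b) -
              (phiS n E0 k (j c)).1 (z - c)) = grd F (phiS n E0 k (j c)).1 (z - c) b := by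
            unfold grd
            congr 1
            rw [toRd_add, map_add]
            abel
          rw [hτ, hgrd]
          exact le_VS H hb m _ _ r hr
      _ = ∑ y ∈ ((B.filter (fun z => G (crn k s z))).filter (fun z => crn k s z = c)).image
          (fun z => z - c), Hf y := by
          rw [Finset.sum_image]
          intro x _ y _ h
          simpa using h
      _ ≤ ∑ y ∈ cubeFin d k, Hf y := by
          refine Finset.sum_le_sum_of_subset_of_nonneg ?_ fun y _ _ => hHnn y
          intro y hy
          rw [Finset.mem_image] at hy
          obtain ⟨z, hz, rfl⟩ := hy
          rw [Finset.mem_filter] at hz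
          rw [← hz.2]
          exact sub_crn_mem hk s z
  · calc _ ≤ ∑ z ∈ B.filter (fun z => ¬ G (crn k s z)),
          Lam E0 c₁ lam ((‖F‖ + 1) ^ p + 1) (τ z ω) := by
          refine Finset.sum_le_sum fun z hz => Finset.sum_le_sum fun b hb => ?_
          rw [Finset.mem_filter] at hz
          obtain ⟨hzB, hzG⟩ := hz
          obtain ⟨r, hr, hr'⟩ := hgr z hzB b hb
          beta_reduce
          rw [hwb z b hb, if_neg hzG]
          simp only [hw]
          rw [if_neg hzG]
          have h0 := hr' 0 0
          simp only [smul_zero, add_zero, sub_zero] at h0 ⊢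
          rw [h0]
          refine (H.hup b hb _ _).trans ?_
          have hg : ‖(‖toRd b‖)⁻¹ • F (toRd b) + r‖ ≤ ‖F‖ + 1 := by
            refine (norm_add_le _ _).trans (add_le_add ?_ (hr.trans hm1))
            have hb0 : 0 < ‖toRd b‖ := toRd_ne_zero (fun h => H.hE00 (h ▸ hb))
            rw [norm_smul, norm_inv, norm_norm, inv_mul_le_iff₀ hb0, mul_comm]
            exact F.le_opNorm _
          have := H.hc₁
          have := H.hlamnn b hb (τ z ω)
          have := H.hp
          gcongr
      _ ≤ _ := by
          refine Finset.sum_le_sum_of_subset_of_nonneg ?_ fun z _ _ => ?_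
          · intro z hz
            rw [Finset.mem_filter] at hz ⊢
            refine ⟨hz.1, fun h => hz.2 fun y hy => ?_⟩
            have h1 := sub_crn_mem hk s z
            rw [mem_cubeFin] at h1 hy
            have := h (y - (z - crn k s z)) fun i => by
              have h1 := h1 i
              have h2 := hy i
              rw [Pi.sub_apply, abs_le]
              constructor <;> linarith
            rwa [show z + (y - (z - crn k s z)) = crn k s z + y by abel] at this
          · refine Finset.sum_nonneg fun b hb => ?_
            have := H.hc₁
            have := H.hlamnn b hb (τ z ω)
            positivity

lemma Lam_nonneg (H : Hyp P τ E0 p c₁ V lam) {M : ℝ} (hM : 0 ≤ M) (ω : Ω) :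
    0 ≤ Lam E0 c₁ lam M ω := by
  refine Finset.sum_nonneg fun b hb => ?_
  have := H.hc₁
  have := H.hlamnn b hb ω
  positivity

lemma Lam_erg (ω : Ω) (h : ∀ b ∈ E0, ∃ I, ErgConv τ (lam b) I ω) (M : ℝ) :
    ∃ I, ErgConv τ (Lam E0 c₁ lam M) I ω := by
  choose! I hI using h
  refine ⟨∑ b ∈ E0, c₁ * (1 + I b * M), fun l u hlu => ?_⟩
  have h1 : Tendsto (fun ε : ℝ => ∑ b ∈ E0, c₁ * (ε ^ d * ((ebox ε l u).card : ℝ) +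
      (ε ^ d * ∑ z ∈ ebox ε l u, lam b (τ z ω)) * M)) (𝓝[>] 0)
      (𝓝 (∑ b ∈ E0, c₁ * ((∏ i, (u i - l i)) + ((∏ i, (u i - l i)) * I b) * M))) :=
    tendsto_finsetSum _ fun b hb => ((tendsto_card_ebox hlu).add
      ((hI b hb l u hlu).mul_const M)).const_mul c₁
  have h2 : ∑ b ∈ E0, c₁ * ((∏ i, (u i - l i)) + ((∏ i, (u i - l i)) * I b) * M) =
      (∏ i, (u i - l i)) * ∑ b ∈ E0, c₁ * (1 + I b * M) := by
    rw [Finset.mul_sum]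
    refine Finset.sum_congr rfl fun b _ => ?_
    ring
  rw [h2] at h1
  refine h1.congr fun ε => ?_
  · unfold Lam
    rw [Finset.sum_comm, Finset.mul_sum]
    refine Finset.sum_congr rfl fun b _ => ?_
    simp only [← Finset.mul_sum, Finset.sum_add_distrib, ← Finset.sum_mul, Finset.sum_const,
      nsmul_eq_mul, mul_one]
    ring

/-- Existence of good local correctors on the box `(l,r]` with energy at most `A`. -/
def PB (τ : Zd d → Ω → Ω) (E0 : Finset (Zd d)) (V : Zd d → Ω → Rn n → ℝ) (ω : Ω)
    (u : Rd d → Rn n) (l r : Fin d → ℝ) (A : ℝ) : Prop :=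
  ∃ C : ℝ, ∀ᶠ ε in 𝓝[>] (0 : ℝ), ∃ w : Zd d → Rn n, (∀ z, ‖w z‖ ≤ C * ε) ∧
    (∀ z, z ∉ ebox ε l r → w z = 0) ∧
    (∀ z, z ∉ ebox ε l r → ∀ b ∈ E0, w (z + b) = 0) ∧
    ε ^ d * ∑ z ∈ ebox ε l r, loc τ E0 V ε ω (fun z => u (ε • toRd z) + w z) z ≤ A

lemma cell_lemma (H : Hyp P τ E0 p c₁ V lam) {k : ℕ} (hk : 0 < k) (J m : ℕ)
    (F : Rd d →L[ℝ] Rn n) (ω : Ω) (I : ℝ) (hI : ErgConv τ (gS τ E0 V k J m F) I ω)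
    (hlam : ∀ b ∈ E0, ∃ I, ErgConv τ (lam b) I ω) (u : Rd d → Rn n) (l r : Fin d → ℝ)
    (hlr : ∀ i, l i < r i)
    (hU : ∀ᶠ ε in 𝓝[>] (0 : ℝ), ∀ z ∈ ebox ε l r, ∀ b ∈ E0,
      ‖u (ε • toRd (z + b)) - u (ε • toRd z) - ε • F (toRd b)‖ ≤
        1 / ((m : ℝ) + 1) * (ε * ‖toRd b‖)) {η : ℝ} (hη : 0 < η) :
    PB τ E0 V ω u l r ((∏ i, (r i - l i)) * (((k : ℝ) ^ d)⁻¹ * I) + η) := by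
  have hbd : ∀ j : Fin (J + 1), ∃ C : ℝ, ∀ z, ‖(phiS n E0 k j).1 z‖ ≤ C := fun j => adm_bdd _
  choose C hC using hbd
  have hC' : ∀ j : Fin (J + 1), ∀ z, ‖(phiS n E0 k j).1 z‖ ≤ ∑ j, |C j| := fun j z =>
    (hC j z).trans ((le_abs_self _).trans
      (Finset.single_le_sum (f := fun j => |C j|) (fun _ _ => abs_nonneg _) (Finset.mem_univ j)))
  have hM0 : (0 : ℝ) ≤ (‖F‖ + 1) ^ p + 1 := by positivity
  obtain ⟨IL, hIL⟩ := Lam_erg (τ := τ) (E0 := E0) (c₁ := c₁) ω hlam ((‖F‖ + 1) ^ p + 1)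
  obtain ⟨γ, hγ, hγlr, hγη⟩ := exists_shrink hlr (η / (4 * (|IL| + 1))) (by positivity)
  refine ⟨∑ j, |C j|, ?_⟩
  have e1 := ((hI l r hlr).const_mul ((k : ℝ) ^ d)⁻¹).eventually_le_const
    (show ((k : ℝ) ^ d)⁻¹ * ((∏ i, (r i - l i)) * I) <
      ((k : ℝ) ^ d)⁻¹ * ((∏ i, (r i - l i)) * I) + η / 2 by linarith)
  have hlt : (∏ i, (r i - l i)) * IL - (∏ i, ((r i - γ) - (l i + γ))) * IL < η / 2 := by
    rw [← sub_mul]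
    have h1 : ((∏ i, (r i - l i)) - ∏ i, ((r i - γ) - (l i + γ))) * IL ≤
        (η / (4 * (|IL| + 1))) * (|IL| + 1) := by
      refine (le_abs_self _).trans ?_
      rw [abs_mul]
      exact mul_le_mul hγη.le (by linarith) (abs_nonneg _) (by positivity)
    have h2 : (η / (4 * (|IL| + 1))) * (|IL| + 1) = η / 4 := by
      have : |IL| + 1 ≠ 0 := by positivity
      field_simp
    linarith
  have e2 := ((hIL l r hlr).sub (hIL _ _ hγlr)).eventually_le_const hlt
  filter_upwards [e1, e2, hU, eventually_small k γ hγ, self_mem_nhdsWithin] with ε e1 e2 hU e3 hε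
  have hε : 0 < ε := hε
  obtain ⟨w, h1, h2, h3, h4⟩ := tile_lemma H hk J m F ω _ hC' (ebox ε l r) hε
    (fun z => u (ε • toRd z)) hU
  refine ⟨w, h1, h2, h3, ?_⟩
  refine (mul_le_mul_of_nonneg_left h4 (by positivity)).trans ?_
  have hbad : ∑ z ∈ (ebox ε l r).filter
        (fun z => ¬ ∀ y : Zd d, (∀ i, |y i| ≤ (k : ℤ)) → z + y ∈ ebox ε l r),
      Lam E0 c₁ lam ((‖F‖ + 1) ^ p + 1) (τ z ω) ≤
      ∑ z ∈ ebox ε l r, Lam E0 c₁ lam ((‖F‖ + 1) ^ p + 1) (τ z ω) -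
      ∑ z ∈ ebox ε (fun i => l i + γ) (fun i => r i - γ),
        Lam E0 c₁ lam ((‖F‖ + 1) ^ p + 1) (τ z ω) := by
    rw [le_sub_iff_add_le, ← Finset.sum_union]
    · refine Finset.sum_le_sum_of_subset_of_nonneg ?_ fun z _ _ => Lam_nonneg H hM0 _
      refine Finset.union_subset (Finset.filter_subset _ _) fun z hz => ?_
      have := shrink_subset hε 0 (fun i => by simp [hγ.le]) hz
      rwa [add_zero] at this
    · rw [Finset.disjoint_left]
      intro z hz hz'
      rw [Finset.mem_filter] at hz
      refine hz.2 fun y hy => shrink_subset hε y (fun i => ?_) hz'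
      refine le_trans ?_ e3
      have : |(y i : ℝ)| ≤ k := by exact_mod_cast hy i
      gcongr
  have hb2 := mul_le_mul_of_nonneg_left hbad (show 0 ≤ ε ^ d by positivity)
  rw [mul_sub] at hb2
  rw [mul_add]
  have e4 : ε ^ d * (((k : ℝ) ^ d)⁻¹ * ∑ z ∈ ebox ε l r, gS τ E0 V k J m F (τ z ω)) =
    ((k : ℝ) ^ d)⁻¹ * (ε ^ d * ∑ z ∈ ebox ε l r, gS τ E0 V k J m F (τ z ω)) := by ring
  rw [e4]
  have e5 : (∏ i, (r i - l i)) * (((k : ℝ) ^ d)⁻¹ * I) =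
    ((k : ℝ) ^ d)⁻¹ * ((∏ i, (r i - l i)) * I) := by ring
  rw [e5]
  linarith
end

/-! ### Gluing -/

section
variable {P : Measure Ω} {τ : Zd d → Ω → Ω} {E0 : Finset (Zd d)} {p c₁ : ℝ}
    {V : Zd d → Ω → Rn n → ℝ} {lam : Zd d → Ω → ℝ}

lemma PB.mono {ω : Ω} {u : Rd d → Rn n} {l r : Fin d → ℝ} {A A' : ℝ}
    (h : PB τ E0 V ω u l r A) (hA : A ≤ A') : PB τ E0 V ω u l r A' := by
  obtain ⟨C, hC⟩ := h
  refine ⟨C, hC.mono fun ε ⟨w, h1, h2, h3, h4⟩ => ⟨w, h1, h2, h3, h4.trans hA⟩⟩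

lemma mem_ebox_box {ε : ℝ} (hε : 0 < ε) (J : BoxIntegral.Box (Fin d)) (z : Zd d) :
    z ∈ ebox ε J.lower J.upper ↔ (fun i => ε * (z i : ℝ)) ∈ J := by
  rw [mem_ebox hε, BoxIntegral.Box.mem_def]
  rfl

lemma glue (ω : Ω) (u : Rd d → Rn n) (J : BoxIntegral.Box (Fin d)) (A : Set (Fin d) → ℝ)
    (h : ∀ s, PB τ E0 V ω u (J.splitCenterBox s).lower (J.splitCenterBox s).upper (A s)) :
    PB τ E0 V ω u J.lower J.upper (∑ s, A s) := by
  choose C hC using h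
  refine ⟨∑ s, C s, ?_⟩
  filter_upwards [eventually_all.2 hC, self_mem_nhdsWithin] with ε h hε
  have hε : 0 < ε := hε
  choose w h1 h2 h3 h4 using h
  have hsub : ∀ s z, z ∈ ebox ε (J.splitCenterBox s).lower (J.splitCenterBox s).upper →
      z ∈ ebox ε J.lower J.upper := by
    intro s z hz
    rw [mem_ebox_box hε] at hz ⊢
    exact J.splitCenterBox_le s hz
  refine ⟨fun z => ∑ s, w s z, ?_, ?_, ?_, ?_⟩
  · intro z
    refine (norm_sum_le _ _).trans ?_
    rw [Finset.sum_mul]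
    exact Finset.sum_le_sum fun s _ => h1 s z
  · intro z hz
    exact Finset.sum_eq_zero fun s _ => h2 s z fun h => hz (hsub s z h)
  · intro z hz b hb
    exact Finset.sum_eq_zero fun s _ => h3 s z (fun h => hz (hsub s z h)) b hb
  have hdis : ∀ s t z, z ∈ ebox ε (J.splitCenterBox s).lower (J.splitCenterBox s).upper →
      s ≠ t → z ∉ ebox ε (J.splitCenterBox t).lower (J.splitCenterBox t).upper := by
    intro s t z hz hst hz'
    rw [mem_ebox_box hε] at hz hz'
    exact Set.disjoint_left.1 (J.disjoint_splitCenterBox hst) hz hz'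
  have hun : ebox ε J.lower J.upper = Finset.univ.biUnion fun s =>
      ebox ε (J.splitCenterBox s).lower (J.splitCenterBox s).upper := by
    ext z
    simp only [Finset.mem_biUnion, Finset.mem_univ, true_and, mem_ebox_box hε]
    exact BoxIntegral.Box.exists_mem_splitCenterBox.symm
  rw [hun, Finset.sum_biUnion, Finset.mul_sum]
  · refine Finset.sum_le_sum fun s _ => ?_
    refine le_trans (le_of_eq ?_) (h4 s)
    congr 1
    refine Finset.sum_congr rfl fun z hz => Finset.sum_congr rfl fun b hb => ?_
    have e1 : ∑ t, w t z = w s z := by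
      refine Finset.sum_eq_single s (fun t _ hts => ?_) (by simp)
      exact h2 t z (hdis s t z hz hts.symm)
    have e2 : ∑ t, w t (z + b) = w s (z + b) := by
      refine Finset.sum_eq_single s (fun t _ hts => ?_) (by simp)
      exact h3 t z (hdis s t z hz hts.symm) b hb
    simp only [e1, e2]
  · intro s _ t _ hst
    rw [Function.onFun, Finset.disjoint_left]
    exact fun z hz => hdis s t z hz hst

lemma toLp_eps (ε : ℝ) (z : Zd d) :
    ε • toRd z = WithLp.toLp 2 (fun i => ε * (z i : ℝ)) := by
  ext i; simp

lemma local_PB (H : Hyp P τ E0 p c₁ V lam) (ω : Ω)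
    (hlam : ∀ b ∈ E0, ∃ I, ErgConv τ (lam b) I ω) {k : ℕ} (hk : 0 < k) (Jn m : ℕ)
    (F : Rd d →L[ℝ] Rn n) (I : ℝ) (hI : ErgConv τ (gS τ E0 V k Jn m F) I ω)
    (u : Rd d → Rn n) (x0 : Rd d) (ρ : ℝ) (hρ : 0 < ρ)
    (hdiff : ∀ x ∈ ball x0 ρ, DifferentiableAt ℝ u x)
    (hF : ∀ x ∈ ball x0 ρ, ‖fderiv ℝ u x - F‖ ≤ 1 / ((m : ℝ) + 1))
    (J : BoxIntegral.Box (Fin d)) (hJ : ∀ y ∈ J, WithLp.toLp 2 y ∈ ball x0 (ρ / 2))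
    {η : ℝ} (hη : 0 < η) :
    PB τ E0 V ω u J.lower J.upper
      ((∏ i, (J.upper i - J.lower i)) * (((k : ℝ) ^ d)⁻¹ * I) + η) := by
  refine cell_lemma H hk Jn m F ω I hI hlam u _ _ J.lower_lt_upper ?_ hη
  filter_upwards [eventually_small (∑ b ∈ E0, ‖toRd b‖) (ρ / 2) (by positivity),
    self_mem_nhdsWithin] with ε hεs hε z hz b hb
  have hε : 0 < ε := hε
  rw [mem_ebox_box hε] at hz
  have hx := hJ _ hz
  rw [← toLp_eps] at hx
  have hx1 : ε • toRd z ∈ ball x0 ρ := ball_subset_ball (by linarith) hx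
  have hbs : ε * ‖toRd b‖ ≤ ρ / 2 := le_trans (mul_le_mul_of_nonneg_left
    (Finset.single_le_sum (f := fun b => ‖toRd b‖) (fun _ _ => norm_nonneg _) hb) hε.le) hεs
  have he : ε • toRd (z + b) = ε • toRd z + ε • toRd b := by rw [toRd_add, smul_add]
  have hx2 : ε • toRd (z + b) ∈ ball x0 ρ := by
    rw [mem_ball, dist_eq_norm] at hx ⊢
    rw [he, add_sub_right_comm]
    refine (norm_add_le _ _).trans_lt ?_
    rw [norm_smul, Real.norm_of_nonneg hε.le]
    linarith
  have := (convex_ball x0 ρ).norm_image_sub_le_of_norm_fderiv_le' hdiff hF hx1 hx2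
  rw [he, add_sub_cancel_left, norm_smul, Real.norm_of_nonneg hε.le, map_smul] at this
  rw [he]
  exact this

lemma low_energy [IsProbabilityMeasure P] (H : Hyp P τ E0 p c₁ V lam) (ω : Ω)
    (hlam : ∀ b ∈ E0, ∃ I, ErgConv τ (lam b) I ω)
    (Fs : ℕ → (Rd d →L[ℝ] Rn n)) (hFs : DenseRange Fs)
    (hg : ∀ k Jn m i, ErgConv τ (gS τ E0 V k Jn m (Fs i)) (∫ ω, gS τ E0 V k Jn m (Fs i) ω ∂P) ω)
    (I : BoxIntegral.Box (Fin d)) (u : Rd d → Rn n) (U : Set (Rd d)) (hU : IsOpen U)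
    (hIU : ∀ x ∈ BoxIntegral.Box.Icc I, WithLp.toLp 2 x ∈ U) (hu : ContDiffOn ℝ 1 u U)
    {η : ℝ} (hη : 0 < η) :
    PB τ E0 V ω u I.lower I.upper
      ((∫ x in BoxIntegral.Box.Icc I, W0 P τ E0 V (fderiv ℝ u (WithLp.toLp 2 x))) + η) := by
  set h : (Fin d → ℝ) → ℝ := fun x => W0 P τ E0 V (fderiv ℝ u (WithLp.toLp 2 x)) with hh
  have hcont : Continuous fun x : Fin d → ℝ => (WithLp.toLp 2 x : Rd d) :=
    PiLp.continuous_toLp 2 _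
  have hfc : ContinuousOn (fderiv ℝ u) U := hu.continuousOn_fderiv_of_isOpen hU le_rfl
  have hIntg : IntegrableOn h (BoxIntegral.Box.Icc I) := by
    have hfc' : ContinuousOn (fun x : Fin d → ℝ => fderiv ℝ u (WithLp.toLp 2 x))
        (BoxIntegral.Box.Icc I) := hfc.comp hcont.continuousOn hIU
    obtain ⟨M, hM⟩ := (BoxIntegral.Box.isCompact_Icc I).exists_bound_of_continuousOn hfc'
    obtain ⟨C, hC⟩ := W0_le H M
    have hmeas : Measurable h := (W0_meas H).comp ((measurable_fderiv ℝ u).comp hcont.measurable)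
    refine IntegrableOn.of_bound (C := C) (BoxIntegral.Box.measure_Icc_lt_top I volume)
      hmeas.aestronglyMeasurable ?_
    refine (ae_restrict_mem (BoxIntegral.Box.measurableSet_Icc I)).mono fun x hx => ?_
    rw [Real.norm_of_nonneg (W0_nonneg H _)]
    exact hC _ (hM x hx)
  have hIntg' : Integrable (fun x => ((h x).toNNReal : ℝ))
      (volume.restrict (BoxIntegral.Box.Icc I)) := by
    refine hIntg.congr (Eventually.of_forall fun x => ?_)
    exact (Real.coe_toNNReal _ (W0_nonneg H _)).symm
  obtain ⟨G, hG1, hG2, hG3, hG4, hG5⟩ :=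
    exists_lt_lowerSemicontinuous_integral_gt_nnreal (fun x => (h x).toNNReal) hIntg'
      (half_pos hη)
  have hG5' : ∫ x in BoxIntegral.Box.Icc I, (G x).toReal <
      (∫ x in BoxIntegral.Box.Icc I, h x) + η / 2 := by
    refine hG5.trans_le (le_of_eq ?_)
    congr 1
    refine integral_congr_ae (Eventually.of_forall fun x => ?_)
    exact Real.coe_toNNReal _ (W0_nonneg H _)
  have hGint : ∀ J ≤ I, IntegrableOn (fun x => (G x).toReal) (J : Set (Fin d → ℝ)) := by
    intro J hJ
    exact IntegrableOn.mono_set hG4 (fun x hx => BoxIntegral.Box.coe_subset_Icc (hJ hx))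
  have key : ∀ η : ℝ, 0 < η → PB τ E0 V ω u I.lower I.upper
      ((∫ x in (I : Set (Fin d → ℝ)), (G x).toReal) + η) := by
    refine BoxIntegral.Box.subbox_induction_on' (p := fun J => J ≤ I → ∀ η : ℝ, 0 < η →
      PB τ E0 V ω u J.lower J.upper
      ((∫ x in (J : Set (Fin d → ℝ)), (G x).toReal) + η)) I ?_ ?_ le_rfl
    · intro J _ hs hJ η hη
      have hN : (0 : ℝ) < Fintype.card (Set (Fin d)) := by
        exact_mod_cast Fintype.card_pos
      refine (glue ω u J _ fun s => hs s ((J.splitCenterBox_le s).trans hJ)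
        (η / Fintype.card (Set (Fin d))) (by positivity)).mono (le_of_eq ?_)
      rw [Finset.sum_add_distrib]
      congr 1
      · rw [← J.iUnion_coe_splitCenterBox, integral_iUnion_fintype]
        · exact fun s => BoxIntegral.Box.measurableSet_coe _
        · exact fun s t hst => J.disjoint_splitCenterBox hst
        · exact fun s => hGint _ ((J.splitCenterBox_le s).trans hJ)
      · rw [Finset.sum_const, nsmul_eq_mul, Finset.card_univ]
        field_simp
    · intro z hz
      obtain ⟨c, hc1, hc2⟩ := ENNReal.lt_iff_exists_nnreal_btwn.1 (hG1 z)
      have hc1' : W0 P τ E0 V (fderiv ℝ u (WithLp.toLp 2 z)) < (c : ℝ) := by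
        have : (h z).toNNReal < c := by exact_mod_cast hc1
        rw [Real.toNNReal_lt_iff_lt_coe (W0_nonneg H _)] at this
        exact this
      obtain ⟨k, Jn, m, i, hk, hFi, hkc⟩ := exists_theta H _ _ hc1' Fs hFs
      have hzU := hIU z hz
      have hev : ∀ᶠ x in 𝓝 (WithLp.toLp 2 z : Rd d), x ∈ U ∧
          ‖fderiv ℝ u x - Fs i‖ < 1 / ((m : ℝ) + 1) := by
        refine (show ∀ᶠ x in 𝓝 (WithLp.toLp 2 z : Rd d), x ∈ U from hU.mem_nhds hzU).and ?_
        have : ContinuousAt (fun x => ‖fderiv ℝ u x - Fs i‖) (WithLp.toLp 2 z : Rd d) :=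
          ((hfc.continuousAt (hU.mem_nhds hzU)).sub continuousAt_const).norm
        exact this.eventually_lt continuousAt_const hFi
      obtain ⟨ρ, hρ, hρ'⟩ := Metric.eventually_nhds_iff_ball.1 hev
      refine ⟨{y | WithLp.toLp 2 y ∈ ball (WithLp.toLp 2 z : Rd d) (ρ / 2)} ∩ {y | (c : ℝ≥0∞) < G y},
        mem_nhdsWithin_of_mem_nhds (inter_mem ?_ (hG2 z c hc2)), ?_⟩
      · exact hcont.continuousAt.preimage_mem_nhds (ball_mem_nhds _ (by positivity))
      intro J _ _ _ hJs _ hJ η hη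
      have hJs' : ∀ y ∈ J, WithLp.toLp 2 y ∈ ball (WithLp.toLp 2 z : Rd d) (ρ / 2) ∧
          (c : ℝ≥0∞) < G y := fun y hy => hJs (BoxIntegral.Box.coe_subset_Icc hy)
      refine (local_PB H ω hlam hk Jn m (Fs i) _ (hg k Jn m i) u _ ρ hρ ?_ ?_ J
        (fun y hy => (hJs' y hy).1) hη).mono ?_
      · intro x hx
        exact (hu.differentiableOn one_ne_zero).differentiableAt (hU.mem_nhds (hρ' x hx).1)
      · intro x hx
        exact (hρ' x hx).2.le
      · refine add_le_add_left ?_ _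
        have hpos : 0 ≤ ∏ i, (J.upper i - J.lower i) :=
          Finset.prod_nonneg fun i _ => sub_nonneg.2 (J.lower_le_upper i)
        refine (mul_le_mul_of_nonneg_left hkc.le hpos).trans ?_
        have hvol : volume.real (J : Set (Fin d → ℝ)) = ∏ i, (J.upper i - J.lower i) := by
          rw [measureReal_def, BoxIntegral.Box.coe_eq_pi,
            Real.volume_pi_Ioc_toReal J.lower_le_upper]
        have e : (∏ i, (J.upper i - J.lower i)) * (c : ℝ) =
            ∫ x in (J : Set (Fin d → ℝ)), (c : ℝ) := by
          rw [setIntegral_const, hvol, smul_eq_mul]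
        rw [e]
        refine setIntegral_mono_ae_restrict (integrableOn_const (by
          exact (BoxIntegral.Box.measure_coe_lt_top J volume).ne)) (hGint J hJ) ?_
        have hsub : (J : Set (Fin d → ℝ)) ⊆ BoxIntegral.Box.Icc I := fun x hx =>
          BoxIntegral.Box.coe_subset_Icc (hJ hx)
        filter_upwards [ae_restrict_mem (BoxIntegral.Box.measurableSet_coe J),
          ae_restrict_of_ae_restrict_of_subset hsub hG3] with x hx hx2
        have := (hJs' x hx).2.le
        have h3 := ENNReal.toReal_mono hx2.ne this
        rwa [ENNReal.coe_toReal] at h3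
  refine (key (η / 2) (half_pos hη)).mono ?_
  have : ∫ x in (I : Set (Fin d → ℝ)), (G x).toReal = ∫ x in BoxIntegral.Box.Icc I, (G x).toReal :=
    setIntegral_congr_set (BoxIntegral.Box.coe_ae_eq_Icc I)
  linarith
end

/-! ### Adjusting the energy and conclusion -/

/-- Lattice points of the open box. -/
def obx (ε : ℝ) (a b : Fin d → ℝ) : Finset (Zd d) :=
  (ebox ε a b).filter fun z => ε • toRd z ∈ openBox a b

lemma mem_obx {ε : ℝ} (hε : 0 < ε) {a b : Fin d → ℝ} {z : Zd d} :
    z ∈ obx ε a b ↔ ε • toRd z ∈ openBox a b := by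
  unfold obx
  rw [Finset.mem_filter]
  refine ⟨fun h => h.2, fun h => ⟨?_, h⟩⟩
  rw [mem_ebox hε]
  intro i
  have h1 := h i
  simp only [PiLp.smul_apply, toRd_apply, smul_eq_mul] at h1
  exact ⟨h1.1, h1.2.le⟩

lemma diag {α : Type*} [Nonempty α] (J : ℝ → α → ℝ) (h0 : ∀ ε v, 0 < ε → 0 ≤ J ε v)
    (h : ∀ η > 0, ∀ᶠ ε in 𝓝[>] (0 : ℝ), ∃ v, J ε v ≤ η) :
    ∃ v : ℝ → α, Tendsto (fun ε => J ε (v ε)) (𝓝[>] 0) (𝓝 0) := by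
  have h1 : ∀ ε : ℝ, ∃ v, 0 < ε → J ε v < (⨅ v, J ε v) + ε := by
    intro ε
    by_cases hε : 0 < ε
    · obtain ⟨v, hv⟩ := exists_lt_of_ciInf_lt (show (⨅ v, J ε v) < (⨅ v, J ε v) + ε by linarith)
      exact ⟨v, fun _ => hv⟩
    · exact ⟨Classical.arbitrary α, fun h => absurd h hε⟩
  choose v hv using h1
  refine ⟨v, ?_⟩
  rw [Metric.tendsto_nhds]
  intro η hη
  have hs : ∀ᶠ ε in 𝓝[>] (0 : ℝ), ε * 1 ≤ η / 3 := eventually_small 1 (η / 3) (by positivity)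
  filter_upwards [h (η / 3) (by positivity), hs, self_mem_nhdsWithin] with ε ⟨v', hv'⟩ hs hε
  have hε : 0 < ε := hε
  have h2 : (⨅ v, J ε v) ≤ J ε v' := ciInf_le ⟨0, by rintro _ ⟨v, rfl⟩; exact h0 ε v hε⟩ v'
  have h3 := hv ε hε
  rw [Real.dist_eq, sub_zero, abs_of_nonneg (h0 _ _ hε)]
  linarith

lemma exists_dir (hn : 1 ≤ n) (D : Rn n) : ∃ e : Rn n, ‖e‖ = 1 ∧ ∀ t : ℝ, 0 ≤ t → t ≤ ‖D - t • e‖ := by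
  by_cases hD : D = 0
  · refine ⟨EuclideanSpace.single (⟨0, hn⟩ : Fin n) 1, by simp, fun t ht => ?_⟩
    rw [hD, zero_sub, norm_neg, norm_smul, Real.norm_of_nonneg ht]
    simp
  · have hD' : 0 < ‖D‖ := norm_pos_iff.2 hD
    refine ⟨-(‖D‖⁻¹ • D), ?_, fun t ht => ?_⟩
    · rw [norm_neg, norm_smul, norm_inv, norm_norm, inv_mul_cancel₀ hD'.ne']
    · have e : D - t • -(‖D‖⁻¹ • D) = (1 + t * ‖D‖⁻¹) • D := by
        rw [add_smul, one_smul, smul_neg, sub_neg_eq_add, smul_smul]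
      rw [e, norm_smul, Real.norm_of_nonneg (by positivity), add_mul, mul_assoc,
        inv_mul_cancel₀ hD'.ne']
      linarith

lemma real_rpow_add_le {x y p : ℝ} (hx : 0 ≤ x) (hy : 0 ≤ y) (hp : 1 ≤ p) :
    (x + y) ^ p ≤ 2 ^ (p - 1) * (x ^ p + y ^ p) := by
  lift x to NNReal using hx
  lift y to NNReal using hy
  exact_mod_cast NNReal.rpow_add_le_mul_rpow_add_rpow x y hp

lemma norm_stdb (i : Fin d) : ‖toRd (stdb i)‖ = 1 := by
  have : toRd (stdb i) = EuclideanSpace.single i (1 : ℝ) := by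
    ext j
    simp [stdb, Pi.single_apply]
  rw [this]
  simp

section
variable {P : Measure Ω} {τ : Zd d → Ω → Ω} {E0 : Finset (Zd d)} {p c₁ : ℝ}
    {V : Zd d → Ω → Rn n → ℝ} {lam : Zd d → Ω → ℝ}

lemma loc_cont (H : Hyp P τ E0 p c₁ V lam) (ε : ℝ) (ω : Ω) (v e : Zd d → Rn n) (z : Zd d) :
    Continuous fun t : ℝ => loc τ E0 V ε ω (fun z => v z + t • e z) z := by
  unfold loc
  refine continuous_finsetSum _ fun b hb => (H.hVcont b hb _).comp ?_
  fun_prop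

/-- Raising the energy by a bump at one site. -/
lemma bump (H : Hyp P τ E0 p c₁ V lam) (hn : 1 ≤ n) (ω : Ω) (i0 : Fin d) (hi0 : stdb i0 ∈ E0)
    (hlow : ∀ (ω : Ω) (r : Rn n), lam (stdb i0) ω * (‖r‖ ^ p / c₁ - c₁) ≤ V (stdb i0) ω r)
    {κ : ℝ} (hκ : 0 < κ) {ε : ℝ} (hε : 0 < ε) (B : Finset (Zd d)) (z0 : Zd d) (hz0 : z0 ∈ B)
    (hκ0 : κ ≤ lam (stdb i0) (τ z0 ω)) {I : ℝ} (hI : 0 ≤ I) (v : Zd d → Rn n) {η : ℝ} (hη : 0 < η)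
    (hv : ε ^ d * ∑ z ∈ B, loc τ E0 V ε ω v z ≤ I + η) :
    ∃ v' : Zd d → Rn n, (∀ z, z ≠ z0 → v' z = v z) ∧
      ‖v' z0 - v z0‖ ≤ ε * (c₁ * (I / (κ * ε ^ d) + c₁)) ^ (1 / p) ∧
      |ε ^ d * ∑ z ∈ B, loc τ E0 V ε ω v' z - I| ≤ η := by
  have hp : 1 < p := H.hp
  have hc : 0 < c₁ := H.hc₁
  set S : ℝ := c₁ * (I / (κ * ε ^ d) + c₁) with hS
  have hS0 : 0 ≤ S := by positivity
  set T : ℝ := ε * S ^ (1 / p) with hT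
  have hT0 : 0 ≤ T := by positivity
  by_cases hlt : I ≤ ε ^ d * ∑ z ∈ B, loc τ E0 V ε ω v z
  · refine ⟨v, fun _ _ => rfl, ?_, ?_⟩
    · rw [sub_self, norm_zero]; exact hT0
    · rw [abs_le]; constructor <;> linarith
  push Not at hlt
  obtain ⟨e, he, hed⟩ := exists_dir hn (v (z0 + stdb i0) - v z0)
  set ee : Zd d → Rn n := fun z => if z = z0 then e else 0 with hee
  set Φ : ℝ → ℝ := fun t => ε ^ d * ∑ z ∈ B, loc τ E0 V ε ω (fun z => v z + t • ee z) z with hΦ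
  have hΦc : Continuous Φ :=
    continuous_const.mul (continuous_finsetSum _ fun z _ => loc_cont H ε ω v ee z)
  have hΦ0 : Φ 0 < I := by
    simp only [hΦ, zero_smul, add_zero]
    exact hlt
  have hne : z0 + stdb i0 ≠ z0 := by
    intro h
    have : stdb i0 = 0 := by simpa using h
    exact H.hE00 (this ▸ hi0)
  have hΦT : I ≤ Φ T := by
    have h1 : V (stdb i0) (τ z0 ω) ((ε * ‖toRd (stdb i0)‖)⁻¹ •
        ((v (z0 + stdb i0) + T • ee (z0 + stdb i0)) - (v z0 + T • ee z0))) ≤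
        loc τ E0 V ε ω (fun z => v z + T • ee z) z0 :=
      Finset.single_le_sum (f := fun b => V b (τ z0 ω) ((ε * ‖toRd b‖)⁻¹ •
        ((v (z0 + b) + T • ee (z0 + b)) - (v z0 + T • ee z0))))
        (fun b hb => H.hVnn b hb _ _) hi0
    have h2 : loc τ E0 V ε ω (fun z => v z + T • ee z) z0 ≤
        ∑ z ∈ B, loc τ E0 V ε ω (fun z => v z + T • ee z) z :=
      Finset.single_le_sum (f := fun z => loc τ E0 V ε ω (fun z => v z + T • ee z) z)
        (fun z _ => loc_nonneg H _ _ _ _) hz0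
    have h3 := hlow (τ z0 ω) ((ε * ‖toRd (stdb i0)‖)⁻¹ •
        ((v (z0 + stdb i0) + T • ee (z0 + stdb i0)) - (v z0 + T • ee z0)))
    set g : Rn n := (ε * ‖toRd (stdb i0)‖)⁻¹ •
        ((v (z0 + stdb i0) + T • ee (z0 + stdb i0)) - (v z0 + T • ee z0)) with hg
    have hgn : S ^ (1 / p) ≤ ‖g‖ := by
      rw [hg, norm_stdb, mul_one, norm_smul, norm_inv, Real.norm_of_nonneg hε.le,
        le_inv_mul_iff₀ hε]
      simp only [hee, if_neg hne, if_true, smul_zero, add_zero]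
      rw [← sub_sub]
      exact hed T hT0
    have hgp : S ≤ ‖g‖ ^ p := by
      have h4 : (S ^ (1 / p)) ^ p ≤ ‖g‖ ^ p :=
        Real.rpow_le_rpow (by positivity) hgn (by linarith)
      rwa [← Real.rpow_mul hS0, one_div, inv_mul_cancel₀ (by linarith), Real.rpow_one] at h4
    have h5 : I / (κ * ε ^ d) ≤ ‖g‖ ^ p / c₁ - c₁ := by
      rw [le_sub_iff_add_le, le_div_iff₀ hc, mul_comm]
      exact hgp
    have h6 : κ * (I / (κ * ε ^ d)) ≤ lam (stdb i0) (τ z0 ω) * (‖g‖ ^ p / c₁ - c₁) :=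
      mul_le_mul hκ0 h5 (by positivity) (hκ.le.trans hκ0)
    have h7 : I = ε ^ d * (κ * (I / (κ * ε ^ d))) := by
      field_simp
    rw [h7]
    exact mul_le_mul_of_nonneg_left (h6.trans (h3.trans (h1.trans h2))) (by positivity)
  obtain ⟨t, ht, hteq⟩ := intermediate_value_Icc hT0 hΦc.continuousOn ⟨hΦ0.le, hΦT⟩
  refine ⟨fun z => v z + t • ee z, ?_, ?_, ?_⟩
  · intro z hz
    simp only [hee, if_neg hz, smul_zero, add_zero]
  · simp only [hee, if_true, add_sub_cancel_left, norm_smul, he, mul_one]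
    rw [Real.norm_of_nonneg ht.1]
    exact ht.2
  · have : ε ^ d * ∑ z ∈ B, loc τ E0 V ε ω (fun z => v z + t • ee z) z = I := hteq
    rw [this, sub_self, abs_zero]
    exact hη.le

lemma approx (H : Hyp P τ E0 p c₁ V lam) (hn : 1 ≤ n) (ω : Ω) (i0 : Fin d) (hi0 : stdb i0 ∈ E0)
    (hlow : ∀ (ω : Ω) (r : Rn n), lam (stdb i0) ω * (‖r‖ ^ p / c₁ - c₁) ≤ V (stdb i0) ω r)
    {κ : ℝ} (hκ : 0 < κ) {IK : ℝ} (hIK : 0 < IK)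
    (hK : ErgConv τ ({ω | κ ≤ lam (stdb i0) ω}.indicator fun _ => (1 : ℝ)) IK ω)
    (u : Rd d → Rn n) (a b : Fin d → ℝ) (hab : ∀ i, a i < b i) {I : ℝ} (hI : 0 ≤ I)
    (hPB : ∀ η > 0, PB τ E0 V ω u a b (I + η)) {q : ℝ} (hq : 0 < q) (hqp : q < p) :
    ∀ η > 0, ∀ᶠ ε in 𝓝[>] (0 : ℝ), ∃ v : Zd d → Rn n,
      ε ^ d * ∑ z ∈ obx ε a b, ‖v z - u (ε • toRd z)‖ ^ q ≤ η ∧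
      |ε ^ d * ∑ z ∈ obx ε a b, loc τ E0 V ε ω v z - I| ≤ η := by
  intro η hη
  have hp : 1 < p := H.hp
  have hc : 0 < c₁ := H.hc₁
  obtain ⟨C, hC⟩ := hPB η hη
  have hmid : ∀ i, a i < (a i + b i) / 2 := fun i => by linarith [hab i]
  have hpos : 0 < (∏ i, ((a i + b i) / 2 - a i)) * IK :=
    mul_pos (Finset.prod_pos fun i _ => sub_pos.2 (hmid i)) hIK
  have e1 := (hK a (fun i => (a i + b i) / 2) hmid).eventually_const_lt hpos
  have hid : Tendsto (fun ε : ℝ => ε) (𝓝[>] 0) (𝓝 0) := tendsto_id.mono_left nhdsWithin_le_nhds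
  have hd0 : Tendsto (fun ε : ℝ => ε ^ d) (𝓝[>] 0) (𝓝 0) := by
    have := hid.pow d
    rwa [zero_pow H.hd.ne'] at this
  have hp0 : Tendsto (fun ε : ℝ => ε ^ p) (𝓝[>] 0) (𝓝 0) := by
    have := hid.rpow_const (p := p) (Or.inr (by linarith))
    rwa [Real.zero_rpow (by linarith)] at this
  have hq0 : Tendsto (fun ε : ℝ => (|C| * ε) ^ q) (𝓝[>] 0) (𝓝 0) := by
    have := (hid.const_mul |C|).rpow_const (p := q) (Or.inr hq.le)
    rwa [mul_zero, Real.zero_rpow hq.ne'] at this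
  have hbn : Tendsto (fun ε : ℝ => (ε ^ d * ((ebox ε a b).card : ℝ)) * (|C| * ε) ^ q +
      (ε ^ d + ε ^ p * (2 ^ (p - 1) * (ε ^ d * |C| ^ p + c₁ * (I / κ + c₁ * ε ^ d)))))
      (𝓝[>] 0) (𝓝 0) := by
    have := ((tendsto_card_ebox hab).mul hq0).add (hd0.add (hp0.mul
      (((hd0.mul_const (|C| ^ p)).add (((hd0.const_mul c₁).const_add (I / κ)).const_mul c₁)).const_mul
        ((2 : ℝ) ^ (p - 1)))))
    simpa only [mul_zero, zero_mul, add_zero] using this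
  filter_upwards [e1, hC, hbn.eventually_le_const hη, self_mem_nhdsWithin] with ε e1 hw e2 hε
  have hε : 0 < ε := hε
  obtain ⟨w, hw1, _, _, hw4⟩ := hw
  obtain ⟨z0, hz0, hz0K⟩ : ∃ z0 ∈ ebox ε a (fun i => (a i + b i) / 2),
      κ ≤ lam (stdb i0) (τ z0 ω) := by
    by_contra hcon
    push Not at hcon
    have : ∑ z ∈ ebox ε a (fun i => (a i + b i) / 2),
        ({ω | κ ≤ lam (stdb i0) ω}.indicator fun _ => (1 : ℝ)) (τ z ω) = 0 := by
      refine Finset.sum_eq_zero fun z hz => Set.indicator_of_notMem ?_ _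
      exact not_le.2 (hcon z hz)
    rw [this, mul_zero] at e1
    exact lt_irrefl _ e1
  have hz0B : z0 ∈ obx ε a b := by
    rw [mem_obx hε]
    rw [mem_ebox hε] at hz0
    intro i
    have := hz0 i
    simp only [PiLp.smul_apply, toRd_apply, smul_eq_mul]
    exact ⟨this.1, by linarith [hab i]⟩
  have hsub : obx ε a b ⊆ ebox ε a b := Finset.filter_subset _ _
  have hv0 : ε ^ d * ∑ z ∈ obx ε a b, loc τ E0 V ε ω (fun z => u (ε • toRd z) + w z) z ≤ I + η := by
    refine le_trans (mul_le_mul_of_nonneg_left (Finset.sum_le_sum_of_subset_of_nonneg hsub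
      fun z _ _ => loc_nonneg H _ _ _ _) (by positivity)) hw4
  obtain ⟨v, hv1, hv2, hv3⟩ := bump H hn ω i0 hi0 hlow hκ hε (obx ε a b) z0 hz0B hz0K hI _ hη hv0
  refine ⟨v, ?_, hv3⟩
  refine le_trans ?_ e2
  have hwC : ∀ z, ‖w z‖ ≤ |C| * ε := fun z => (hw1 z).trans
    (mul_le_mul_of_nonneg_right (le_abs_self C) hε.le)
  set S : ℝ := c₁ * (I / (κ * ε ^ d) + c₁) with hS
  have hS0 : 0 ≤ S := by positivity
  rw [← Finset.sum_erase_add _ _ hz0B, mul_add]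
  refine add_le_add ?_ ?_
  · rw [mul_assoc]
    refine mul_le_mul_of_nonneg_left ?_ (by positivity)
    calc _ ≤ ∑ z ∈ (obx ε a b).erase z0, (|C| * ε) ^ q := by
          refine Finset.sum_le_sum fun z hz => ?_
          rw [hv1 z (Finset.ne_of_mem_erase hz), add_sub_cancel_left]
          exact Real.rpow_le_rpow (norm_nonneg _) (hwC z) hq.le
      _ ≤ _ := by
          rw [Finset.sum_const, nsmul_eq_mul]
          refine mul_le_mul_of_nonneg_right ?_ (by positivity)
          exact_mod_cast Finset.card_le_card ((Finset.erase_subset _ _).trans hsub)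
  · have hx : ‖v z0 - u (ε • toRd z0)‖ ≤ ε * (|C| + S ^ (1 / p)) := by
      have e : v z0 - u (ε • toRd z0) = (v z0 - (u (ε • toRd z0) + w z0)) + w z0 := by abel
      rw [e]
      refine (norm_add_le _ _).trans ?_
      have := hwC z0
      rw [mul_add]
      linarith
    set x := ‖v z0 - u (ε • toRd z0)‖ with hxdef
    have hx0 : 0 ≤ x := norm_nonneg _
    have h1 : x ^ q ≤ 1 + x ^ p := by
      rcases le_total x 1 with h | h
      · have := Real.rpow_le_one hx0 h hq.le
        have := Real.rpow_nonneg hx0 p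
        linarith
      · have := Real.rpow_le_rpow_of_exponent_le h hqp.le
        linarith
    have h2 : x ^ p ≤ ε ^ p * (2 ^ (p - 1) * (|C| ^ p + S)) := by
      refine (Real.rpow_le_rpow hx0 hx (by linarith)).trans ?_
      rw [Real.mul_rpow hε.le (by positivity)]
      refine mul_le_mul_of_nonneg_left ?_ (by positivity)
      have h3 := real_rpow_add_le (abs_nonneg C)
        (Real.rpow_nonneg hS0 (1 / p)) hp.le
      have h4 : (S ^ (1 / p)) ^ p = S := by
        rw [← Real.rpow_mul hS0, one_div, inv_mul_cancel₀ (by linarith), Real.rpow_one]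
      rwa [h4] at h3
    calc ε ^ d * x ^ q ≤ ε ^ d * (1 + ε ^ p * (2 ^ (p - 1) * (|C| ^ p + S))) :=
          mul_le_mul_of_nonneg_left (h1.trans (by linarith)) (by positivity)
      _ = ε ^ d + ε ^ p * (2 ^ (p - 1) * (ε ^ d * |C| ^ p + ε ^ d * S)) := by ring
      _ = _ := by
          have h8 : ε ^ d * S = c₁ * (I / κ + c₁ * ε ^ d) := by
            rw [hS]
            field_simp
          rw [h8]
end

/-! ### The event of full measure -/

lemma lam_integrable (P : Measure Ω) [IsProbabilityMeasure P] {f : Ω → ℝ} (hf : Measurable f)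
    (h0 : ∀ ω, 0 ≤ f ω) {α : ℝ} (hα : 1 ≤ α) (h : ∫⁻ ω, ENNReal.ofReal (f ω ^ α) ∂P < ⊤) :
    Integrable f P := by
  have h1 : Integrable (fun ω => f ω ^ α) P := by
    refine ⟨(hf.pow_const α).aestronglyMeasurable, ?_⟩
    rw [hasFiniteIntegral_iff_ofReal (Eventually.of_forall fun ω => Real.rpow_nonneg (h0 ω) α)]
    exact h
  refine ((integrable_const (1 : ℝ)).add h1).mono' hf.aestronglyMeasurable ?_
  refine Eventually.of_forall fun ω => ?_
  rw [Real.norm_of_nonneg (h0 ω)]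
  simp only [Pi.add_apply]
  rcases le_total (f ω) 1 with h2 | h2
  · linarith [Real.rpow_nonneg (h0 ω) α]
  · have := Real.rpow_le_rpow_of_exponent_le h2 hα
    rw [Real.rpow_one] at this
    linarith

lemma exists_kappa (P : Measure Ω) [IsProbabilityMeasure P] {f : Ω → ℝ} (hf : Measurable f)
    {β : ℝ} (hβ : 0 < β) (h : ∫⁻ ω, ENNReal.ofReal (f ω) ^ (-β) ∂P < ⊤) :
    ∃ κ : ℝ, 0 < κ ∧ 0 < ∫ ω, ({ω | κ ≤ f ω}.indicator fun _ => (1 : ℝ)) ω ∂P := by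
  have hpos : ∀ᵐ ω ∂P, 0 < f ω := by
    filter_upwards [ae_lt_top ((ENNReal.measurable_ofReal.comp hf).pow_const (-β)) h.ne] with ω hω
    by_contra hc
    rw [Function.comp_apply, ENNReal.ofReal_of_nonpos (not_lt.1 hc),
      ENNReal.zero_rpow_of_neg (by linarith)] at hω
    exact lt_irrefl _ hω
  have hms : ∀ κ : ℝ, MeasurableSet {ω | κ ≤ f ω} := fun κ => measurableSet_le measurable_const hf
  by_contra hc
  push Not at hc
  have hz : ∀ N : ℕ, ∀ᵐ ω ∂P, ¬ (1 / ((N : ℝ) + 1) ≤ f ω) := by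
    intro N
    have h1 := hc (1 / ((N : ℝ) + 1)) (by positivity)
    rw [integral_indicator_const _ (hms _), smul_eq_mul, mul_one] at h1
    have h2 : P.real {ω | 1 / ((N : ℝ) + 1) ≤ f ω} = 0 := le_antisymm h1 measureReal_nonneg
    rw [measureReal_eq_zero_iff] at h2
    rw [ae_iff]
    simpa using h2
  have : ∀ᵐ ω ∂P, False := by
    filter_upwards [hpos, ae_all_iff.2 hz] with ω h1 h2
    obtain ⟨N, hN⟩ := exists_nat_one_div_lt h1
    exact h2 N hN.le
  exact IsProbabilityMeasure.ne_zero P (by simpa using this)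

lemma closed_sub {a b : Fin d → ℝ} (hab : ∀ i, a i < b i) {x : Fin d → ℝ}
    (hx : x ∈ Set.Icc a b) : (WithLp.toLp 2 x : Rd d) ∈ closure (openBox a b) := by
  have hcont : Continuous fun x : Fin d → ℝ => (WithLp.toLp 2 x : Rd d) :=
    PiLp.continuous_toLp 2 _
  have h1 : x ∈ closure (Set.univ.pi fun i => Set.Ioo (a i) (b i)) := by
    rw [closure_pi_set]
    intro i _
    show x i ∈ closure (Set.Ioo (a i) (b i))
    rw [closure_Ioo (hab i).ne]
    exact ⟨hx.1 i, hx.2 i⟩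
  have h2 := image_closure_subset_closure_image hcont ⟨x, h1, rfl⟩
  refine closure_mono ?_ h2
  rintro _ ⟨y, hy, rfl⟩
  exact fun i => hy i (Set.mem_univ i)

lemma integral_box {a b : Fin d → ℝ} (hab : ∀ i, a i < b i) (g : Rd d → ℝ) :
    ∫ x in openBox a b, g x =
      ∫ x in BoxIntegral.Box.Icc (⟨a, b, hab⟩ : BoxIntegral.Box (Fin d)), g (WithLp.toLp 2 x) := by
  rw [← setIntegral_congr_set (BoxIntegral.Box.Ioo_ae_eq_Icc _)]
  have h1 := (PiLp.volume_preserving_toLp (Fin d)).setIntegral_preimage_emb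
    (MeasurableEquiv.toLp 2 (Fin d → ℝ)).measurableEmbedding g (openBox a b)
  rw [← h1]
  congr 2
  ext x
  exact ⟨fun h i _ => h i, fun h i => h i (Set.mem_univ i)⟩

/-- existence of recovery sequences, discrete form of Proposition 3.11,
for `C¹` limits. -/
theorem gamma_limsup
    {d n : ℕ} (hd : 2 ≤ d) (hn : 1 ≤ n)
    {Ω : Type*} [MeasurableSpace Ω] (P : Measure Ω) [IsProbabilityMeasure P]
    (τ : Zd d → Ω → Ω) (hτ0 : τ 0 = id)
    (hτadd : ∀ x y : Zd d, τ (x + y) = τ x ∘ τ y)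
    (hτmp : ∀ z : Zd d, MeasurePreserving (τ z) P P)
    (hτerg : ∀ B : Set Ω, MeasurableSet B → (∀ z : Zd d, τ z ⁻¹' B = B) → P B = 0 ∨ P B = 1)
    (E0 : Finset (Zd d)) (hE00 : (0 : Zd d) ∉ E0) (hE0b : ∀ i : Fin d, stdb i ∈ E0)
    (p c₁ : ℝ) (hp : 1 < p) (hc₁ : 0 < c₁)
    (V : Zd d → Ω → Rn n → ℝ)
    (hVmeas : ∀ b ∈ E0, Measurable fun q : Ω × Rn n => V b q.1 q.2)
    (hVcont : ∀ b ∈ E0, ∀ ω : Ω, Continuous (V b ω))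
    (hVnn : ∀ b ∈ E0, ∀ (ω : Ω) (r : Rn n), 0 ≤ V b ω r)
    (lam : Zd d → Ω → ℝ)
    (hlammeas : ∀ b ∈ E0, Measurable (lam b))
    (hlamnn : ∀ b ∈ E0, ∀ ω : Ω, 0 ≤ lam b ω)
    (hgrowth : ∀ b ∈ E0, ∀ (ω : Ω) (r : Rn n),
      lam b ω * (‖r‖ ^ p / c₁ - c₁) ≤ V b ω r ∧ V b ω r ≤ c₁ * (1 + lam b ω * (‖r‖ ^ p + 1)))
    (α β : ℝ) (hα : 1 ≤ α) (hβ : 1 / (p - 1) ≤ β)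
    (hmomα : ∀ b ∈ E0, ∫⁻ ω, ENNReal.ofReal (lam b ω ^ α) ∂P < ⊤)
    (hmomβ : ∀ i : Fin d, ∫⁻ ω, ENNReal.ofReal (lam (stdb i) ω) ^ (-β) ∂P < ⊤)
    (h2T : (1 < α ∧ 1 / α + 1 / β ≤ p / (d : ℝ)) ∨
      (n = 1 ∧ ∃ q c₂ : ℝ, 1 < q ∧ q < p ∧ ∃ f : Zd d → Ω → Rn n → ℝ,
        ∀ b ∈ E0, ∀ ω : Ω,
          (∀ r : Rn n, 0 ≤ f b ω r) ∧
          ConvexOn ℝ Set.univ (fun r : Rn n => V b ω r + f b ω r) ∧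
          (∀ r : Rn n, f b ω r ≤ c₂ * (1 + lam b ω * (‖r‖ ^ q + 1)))))
    : ∃ Ω₁ : Set Ω, MeasurableSet Ω₁ ∧ P Ω₁ = 1 ∧
      ∀ ω ∈ Ω₁, ∀ a b : Fin d → ℝ, ∀ u : Rd d → Rn n, ∀ U : Set (Rd d),
        IsOpen U → closure (openBox a b) ⊆ U → ContDiffOn ℝ 1 u U →
        ∃ uε : ℝ → Zd d → Rn n,
          Tendsto (fun ε : ℝ => ε ^ d * ∑' z : Zd d,
              if ε • toRd z ∈ openBox a b then
                ‖uε ε z - u (ε • toRd z)‖ ^ (p * β / (β + 1)) else 0)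
            (𝓝[>] (0 : ℝ)) (𝓝 0) ∧
          Tendsto (fun ε : ℝ => energyE τ E0 V ε ω (uε ε) (openBox a b))
            (𝓝[>] (0 : ℝ)) (𝓝 (∫ x in openBox a b, W0 P τ E0 V (fderiv ℝ u x))) := by
  have hd0 : 0 < d := by omega
  have hβ0 : 0 < β := lt_of_lt_of_le (by have : 0 < p - 1 := by linarith
                                         positivity) hβ
  have H : Hyp P τ E0 p c₁ V lam :=
    { hd := hd0
      hτ0 := hτ0
      hτadd := hτadd
      hτmp := hτmp
      hE00 := hE00
      hp := hp
      hc₁ := hc₁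
      hVmeas := hVmeas
      hVcont := hVcont
      hVnn := hVnn
      hlammeas := hlammeas
      hlamnn := hlamnn
      hup := fun b hb ω r => (hgrowth b hb ω r).2
      hlamint := fun b hb => lam_integrable P (hlammeas b hb) (hlamnn b hb) hα (hmomα b hb) }
  let i0 : Fin d := ⟨0, hd0⟩
  have hi0 : stdb i0 ∈ E0 := hE0b i0
  obtain ⟨κ, hκ, hIK⟩ := exists_kappa P (hlammeas _ hi0) hβ0 (hmomβ i0)
  have hms : MeasurableSet {ω | κ ≤ lam (stdb i0) ω} :=
    measurableSet_le measurable_const (hlammeas _ hi0)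
  let Fs : ℕ → (Rd d →L[ℝ] Rn n) := TopologicalSpace.denseSeq _
  have hFs : DenseRange Fs := TopologicalSpace.denseRange_denseSeq _
  have hev : ∀ᵐ ω ∂P, (∀ b : E0, ErgConv τ (lam b.1) (∫ ω, lam b.1 ω ∂P) ω) ∧
      (∀ k Jn m i, ErgConv τ (gS τ E0 V k Jn m (Fs i)) (∫ ω, gS τ E0 V k Jn m (Fs i) ω ∂P) ω) ∧
      ErgConv τ ({ω | κ ≤ lam (stdb i0) ω}.indicator fun _ => (1 : ℝ))
        (∫ ω, ({ω | κ ≤ lam (stdb i0) ω}.indicator fun _ => (1 : ℝ)) ω ∂P) ω := by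
    refine (ae_all_iff.2 fun b => ?_).and (Eventually.and ?_ ?_)
    · exact ergodic_theorem P hτ0 hτadd hτmp hτerg _ (hlammeas _ b.2) (H.hlamint _ b.2)
    · refine ae_all_iff.2 fun k => ae_all_iff.2 fun Jn => ae_all_iff.2 fun m =>
        ae_all_iff.2 fun i => ?_
      exact ergodic_theorem P hτ0 hτadd hτmp hτerg _ (gS_meas H _ _ _ _) (gS_int H _ _ _ _)
    · exact ergodic_theorem P hτ0 hτadd hτmp hτerg _ (measurable_const.indicator hms)
        ((integrable_const (1 : ℝ)).indicator hms)
  obtain ⟨T, hT, hTm, hT0⟩ := exists_measurable_superset_of_null (ae_iff.1 hev)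
  refine ⟨Tᶜ, hTm.compl, (prob_compl_eq_one_iff hTm).2 hT0, ?_⟩
  intro ω hω a b u U hU hAU hu
  have hgood := not_not.1 fun hc => hω (hT hc)
  obtain ⟨hlam, hg, hK⟩ := hgood
  by_cases hab : ∀ i, a i < b i
  swap
  · push Not at hab
    obtain ⟨i, hi⟩ := hab
    have he : openBox a b = ∅ := by
      ext x
      simp only [Set.mem_empty_iff_false, iff_false]
      intro hx
      exact absurd ((hx i).1.trans (hx i).2) (not_lt.2 hi)
    refine ⟨fun _ _ => 0, ?_, ?_⟩
    · simp [he]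
    · simp [he, energyE]
  set I : ℝ := ∫ x in openBox a b, W0 P τ E0 V (fderiv ℝ u x) with hIdef
  have hI : 0 ≤ I := integral_nonneg fun x => W0_nonneg H _
  have hPB : ∀ η > 0, PB τ E0 V ω u a b (I + η) := by
    intro η hη
    have h1 := low_energy H ω (fun b hb => ⟨_, hlam ⟨b, hb⟩⟩) Fs hFs hg ⟨a, b, hab⟩ u U hU
      (fun x hx => hAU (closed_sub hab hx)) hu hη
    rw [hIdef, integral_box hab]
    exact h1
  set q : ℝ := p * β / (β + 1) with hq
  have hq0 : 0 < q := by positivity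
  have hqp : q < p := by
    rw [hq, div_lt_iff₀ (by linarith)]
    nlinarith
  have hap := approx H hn ω i0 hi0 (fun ω r => (hgrowth _ hi0 ω r).1) hκ hIK hK u a b hab hI hPB
    hq0 hqp
  have hnn : ∀ (ε : ℝ) (v : Zd d → Rn n), 0 < ε →
      0 ≤ ε ^ d * ∑ z ∈ obx ε a b, ‖v z - u (ε • toRd z)‖ ^ q := fun ε v hε =>
    mul_nonneg (by positivity) (Finset.sum_nonneg fun z _ => Real.rpow_nonneg (norm_nonneg _) _)
  obtain ⟨v, hv⟩ := diag (fun (ε : ℝ) (v : Zd d → Rn n) =>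
      ε ^ d * ∑ z ∈ obx ε a b, ‖v z - u (ε • toRd z)‖ ^ q +
        |ε ^ d * ∑ z ∈ obx ε a b, loc τ E0 V ε ω v z - I|)
    (fun ε v hε => add_nonneg (hnn ε v hε) (abs_nonneg _)) (by
      intro η hη
      filter_upwards [hap (η / 2) (by linarith)] with ε ⟨v, h1, h2⟩
      exact ⟨v, by linarith⟩)
  refine ⟨v, ?_, ?_⟩
  · have h1 : Tendsto (fun ε : ℝ => ε ^ d * ∑ z ∈ obx ε a b, ‖v ε z - u (ε • toRd z)‖ ^ q)
        (𝓝[>] 0) (𝓝 0) := by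
      refine tendsto_of_tendsto_of_tendsto_of_le_of_le' tendsto_const_nhds hv ?_ ?_
      · filter_upwards [self_mem_nhdsWithin] with ε hε
        exact hnn ε _ hε
      · exact Eventually.of_forall fun ε => le_add_of_nonneg_right (abs_nonneg _)
    refine h1.congr' ?_
    filter_upwards [self_mem_nhdsWithin] with ε hε
    have hε : 0 < ε := hε
    rw [tsum_eq_sum (s := obx ε a b)]
    · congr 1
      refine Finset.sum_congr rfl fun z hz => ?_
      rw [if_pos ((mem_obx hε).1 hz)]
    · intro z hz
      rw [if_neg (fun h => hz ((mem_obx hε).2 h))]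
  · have h1 : Tendsto (fun ε : ℝ => |ε ^ d * ∑ z ∈ obx ε a b, loc τ E0 V ε ω (v ε) z - I|)
        (𝓝[>] 0) (𝓝 0) := by
      refine tendsto_of_tendsto_of_tendsto_of_le_of_le' tendsto_const_nhds hv ?_ ?_
      · exact Eventually.of_forall fun ε => abs_nonneg _
      · filter_upwards [self_mem_nhdsWithin] with ε hε
        exact le_add_of_nonneg_left (hnn ε _ hε)
    have h2 : Tendsto (fun ε : ℝ => ε ^ d * ∑ z ∈ obx ε a b, loc τ E0 V ε ω (v ε) z)
        (𝓝[>] 0) (𝓝 I) := by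
      rw [tendsto_iff_dist_tendsto_zero]
      exact h1
    refine h2.congr' ?_
    filter_upwards [self_mem_nhdsWithin] with ε hε
    have hε : 0 < ε := hε
    unfold energyE
    rw [tsum_eq_sum (s := obx ε a b)]
    · congr 1
      refine Finset.sum_congr rfl fun z hz => ?_
      rw [if_pos ((mem_obx hε).1 hz)]
      rfl
    · intro z hz
      rw [if_neg (fun h => hz ((mem_obx hε).2 h))]

end StochHom
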